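/- Let K = GF(q) be a finite field with q ≡ 1 (mod 4) and (V, f) a finite-dimensional nondegenerate symmetric bilinear space over K. For φ ∈ O(V) the following are equivalent: (1) σφσ⁻¹ = φ⁻¹ for some involution σ ∈ Ω(V); (2) αφα⁻¹ = φ⁻¹ for some α ∈ SO(V); (3) if dim V ≡ 2 (mod 4), then φ has an orthogonally indecomposable orthogonal summand of odd dimension. -/

import Mathlib

open Polynomial Module

namespace Biref

variable {K V : Type*} [Field K] [AddCommGroup V] [Module K V]

/-- The orthogonal group of a bilinear form: all linear automorphisms preserving `f`. -/
def orthGroup (f : LinearMap.BilinForm K V) : Subgroup (V ≃ₗ[K] V) where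
  carrier := {φ | ∀ x y : V, f (φ x) (φ y) = f x y}
  one_mem' := fun _ _ => rfl
  mul_mem' := by
    intro a b ha hb x y
    simpa using (ha (b x) (b y)).trans (hb x y)
  inv_mem' := by
    intro a ha x y
    show f (a.symm x) (a.symm y) = f x y
    conv_rhs => rw [← a.apply_symm_apply x, ← a.apply_symm_apply y]
    exact (ha _ _).symm

/-- The special orthogonal group: isometries of determinant 1. -/
def specialOrthGroup (f : LinearMap.BilinForm K V) : Subgroup (V ≃ₗ[K] V) where
  carrier := {φ | (∀ x y : V, f (φ x) (φ y) = f x y) ∧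
      LinearMap.det (φ : V →ₗ[K] V) = 1}
  one_mem' := ⟨fun _ _ => rfl, by simp⟩
  mul_mem' := by
    rintro a b ⟨ha, ha'⟩ ⟨hb, hb'⟩
    refine ⟨fun x y => by simpa using (ha (b x) (b y)).trans (hb x y), ?_⟩
    rw [LinearEquiv.coe_toLinearMap_mul, map_mul, ha', hb', one_mul]
  inv_mem' := by
    rintro a ⟨ha, ha'⟩
    refine ⟨fun x y => ?_, ?_⟩
    · show f (a.symm x) (a.symm y) = f x y
      conv_rhs => rw [← a.apply_symm_apply x, ← a.apply_symm_apply y]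
      exact (ha _ _).symm
    · have h1 : LinearMap.det ((a⁻¹ * a : V ≃ₗ[K] V) : V →ₗ[K] V) = 1 := by
        rw [inv_mul_cancel, LinearEquiv.coe_toLinearMap_one, LinearMap.det_id]
      rw [LinearEquiv.coe_toLinearMap_mul, map_mul, ha', mul_one] at h1
      exact h1

/-- The commutator subgroup `Ω(V)` of the orthogonal group. -/
def omegaGroup (f : LinearMap.BilinForm K V) : Subgroup (V ≃ₗ[K] V) :=
  ⁅orthGroup f, orthGroup f⁆

/-- `g` is a product of two involutions lying in the subgroup `H`. -/
def IsBireflectionalIn {G : Type*} [Group G] (H : Subgroup G) (g : G) : Prop :=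
  ∃ σ τ : G, σ ∈ H ∧ τ ∈ H ∧ σ ^ 2 = 1 ∧ τ ^ 2 = 1 ∧ g = σ * τ

/-- `g` is bireflectional in the group `G`. -/
def IsBireflectional {G : Type*} [Group G] (g : G) : Prop :=
  ∃ σ τ : G, σ ^ 2 = 1 ∧ τ ^ 2 = 1 ∧ g = σ * τ

/-- `g` is reversed by some element of `H`. -/
def IsReversibleIn {G : Type*} [Group G] (H : Subgroup G) (g : G) : Prop :=
  ∃ α : G, α ∈ H ∧ α * g * α⁻¹ = g⁻¹

/-- A subspace is invariant under an endomorphism. -/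
def Invt (ψ : V →ₗ[K] V) (U : Submodule K V) : Prop :=
  ∀ x ∈ U, ψ x ∈ U

/-- The discriminant of a (finite-dimensional, nondegenerate) bilinear space is the class
of `d` in `K*/(K*)²`: some Gram determinant equals `d` times a nonzero square. -/
def HasDisc (f : LinearMap.BilinForm K V) (d : K) : Prop :=
  ∃ (b : Basis (Fin (Module.finrank K V)) K V) (c : Kˣ),
    (Matrix.of fun i j => f (b i) (b j)).det = d * (c : K) ^ 2

/-- A nondegenerate symmetric bilinear space is hyperbolic iff its Witt index is half its
dimension, i.e. there is a totally isotropic subspace of half the dimension. -/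
def IsHyperbolicSpace (f : LinearMap.BilinForm K V) : Prop :=
  ∃ W : Submodule K V, (∀ x ∈ W, ∀ y ∈ W, f x y = 0) ∧
    2 * Module.finrank K W = Module.finrank K V

/-- The multiplicity of `p ^ d` as an elementary divisor of `φ`. -/
noncomputable def edMult (φ : Module.End K V) (p : K[X]) (d : ℕ) : ℕ :=
  (2 * Module.finrank K (LinearMap.ker (Polynomial.aeval φ p ^ d))
    - Module.finrank K (LinearMap.ker (Polynomial.aeval φ p ^ (d + 1)))
    - Module.finrank K (LinearMap.ker (Polynomial.aeval φ p ^ (d - 1)))) / p.natDegree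

/-- `n_j(φ)`: the number of elementary divisors `(x ± 1) ^ d` of `φ` with `d ≡ j mod 8`,
counted with multiplicity. -/
noncomputable def nPM [FiniteDimensional K V] (φ : Module.End K V) (j : ℕ) : ℕ :=
  ∑ d ∈ Finset.range (Module.finrank K V + 1),
    if d % 8 = j % 8 then edMult φ (X - 1) d + edMult φ (X + 1) d else 0

/-- The Fitting one space `Bahn^∞(ψ) = ⋂ⱼ im (ψ - 1)^j`. -/
noncomputable def bahnInf (ψ : Module.End K V) : Submodule K V :=
  ⨅ j : ℕ, LinearMap.range ((ψ - 1) ^ j)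

/-- The `K[x]`-submodule generated by `v` (`x` acting as `ψ`). -/
def cycSub (ψ : Module.End K V) (v : V) : Submodule K V :=
  Submodule.span K (Set.range fun n : ℕ => (ψ ^ n) v)

/-- `V` is a cyclic `K[x]`-module, `x` acting as `ψ`. -/
def IsCyclicEnd (ψ : Module.End K V) : Prop :=
  ∃ v : V, cycSub ψ v = ⊤

/-- `V` is a direct sum of two cyclic `K[x]`-submodules, `x` acting as `ψ`. -/
def IsBicyclicEnd (ψ : Module.End K V) : Prop :=
  ∃ v w : V, cycSub ψ v ⊓ cycSub ψ w = ⊥ ∧ cycSub ψ v ⊔ cycSub ψ w = ⊤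

/-- `V` is an indecomposable `K[x]`-module, `x` acting as `ψ`. -/
def ModIndec (ψ : Module.End K V) : Prop :=
  (⊥ : Submodule K V) ≠ ⊤ ∧
    ¬∃ A B : Submodule K V, Invt ψ A ∧ Invt ψ B ∧ A ≠ ⊥ ∧ B ≠ ⊥ ∧ A ⊓ B = ⊥ ∧ A ⊔ B = ⊤

/-- `ψ` is orthogonally indecomposable w.r.t. `f`: `V ≠ 0` and the only nondegenerate
invariant subspaces are `0` and `V`. -/
def OrthIndec (f : LinearMap.BilinForm K V) (ψ : Module.End K V) : Prop :=
  (⊥ : Submodule K V) ≠ ⊤ ∧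
    ∀ U : Submodule K V, Invt ψ U → (f.restrict U).Nondegenerate → U = ⊥ ∨ U = ⊤

/-- The Witt index: the dimension of a maximal totally isotropic subspace. -/
noncomputable def wittIndex (f : LinearMap.BilinForm K V) : ℕ :=
  sSup {n | ∃ W : Submodule K V, (∀ x ∈ W, ∀ y ∈ W, f x y = 0) ∧ Module.finrank K W = n}

/-!
Put `a = φ + φ⁻¹` and `N = φ - φ⁻¹`. An involution with eigenspaces `P` (for `1`) and `M = P^⊥`
(for `-1`) reverses `φ` as soon as `P` and `M` are `a`-invariant and interchanged by `N`. It is the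
product of the reflections in an orthogonal basis of `M`, so the parity of `dim M` and the square
class of `disc M` decide whether it lies in `SO(V)` and in `Ω(V)`.

On an orthogonally indecomposable space, `P` and `M` are built from the cyclic `a`-subspaces of a
vector `v` and of `N v`. As `q ≡ 1 (mod 4)`, `-1` is a square, and hyperbolic spaces have square
discriminant. It turns out that one can have `dim M` even with `disc M` a square when
`dim V ≡ 0 (mod 4)`, `dim M` odd with `disc M` in either square class when `dim V ≡ 2 (mod 4)`,
and an `M` of each parity, with square discriminant for the even one, when `dim V` is odd.
Orthogonal sums preserve these three alternatives, where an even-dimensional sum with an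
odd-dimensional summand is of the third kind; this gives (3) ⇒ (1).

Conversely, if `dim V ≡ 2 (mod 4)`, some isometry `σ` of determinant `-1` reverses `φ`. If
`α ∈ SO(V)` reverses `φ` too, then `σα` commutes with `φ` and has determinant `-1`. Its generalized
eigenspace for `-1` is `φ`-invariant and nondegenerate, and it has odd dimension because, by the
Cayley transform, `σα` has determinant `1` on the orthogonal complement. A minimal `φ`-invariant
nondegenerate subspace of odd dimension is orthogonally indecomposable.
-/

section Reflection

theorem involutive_transvection (f : LinearMap.BilinForm K V) (v : V) :
    Function.Involutive (LinearMap.transvection (-(2 / f v v) • f v) v) := by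
  intro x
  simp only [LinearMap.transvection.apply, map_add, map_smul, LinearMap.smul_apply, smul_eq_mul]
  rcases eq_or_ne (f v v) 0 with h | h
  · simp [h]
  · have h2 : -(2 / f v v) * f v v = -2 := by field_simp
    rw [h2]
    module

/-- The reflection of `V` in the hyperplane orthogonal to `v`. Since `2 / 0 = 0`, it is the
identity when `v` is isotropic. -/
noncomputable def orthReflection (f : LinearMap.BilinForm K V) (v : V) : V ≃ₗ[K] V :=
  LinearEquiv.ofInvolutive (LinearMap.transvection (-(2 / f v v) • f v) v)
    (involutive_transvection f v)

variable {f : LinearMap.BilinForm K V}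

theorem orthReflection_apply (v x : V) :
    orthReflection f v x = x - (2 / f v v * f v x) • v := by
  simp [orthReflection, LinearMap.transvection.apply, sub_eq_add_neg]

theorem orthReflection_mul_self (v : V) : orthReflection f v * orthReflection f v = 1 :=
  LinearEquiv.ext (involutive_transvection f v)

theorem orthReflection_inv (v : V) : (orthReflection f v)⁻¹ = orthReflection f v :=
  inv_eq_of_mul_eq_one_left (orthReflection_mul_self v)

theorem orthReflection_apply_of_eq_zero {v x : V} (h : f v x = 0) : orthReflection f v x = x := by
  simp [orthReflection_apply, h]

theorem orthReflection_apply_self {v : V} (h : f v v ≠ 0) : orthReflection f v v = -v := by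
  rw [orthReflection_apply, div_mul_cancel₀ _ h]
  module

theorem det_orthReflection [FiniteDimensional K V] {v : V} (h : f v v ≠ 0) :
    LinearMap.det (orthReflection f v : V →ₗ[K] V) = -1 := by
  change LinearMap.det (LinearMap.transvection (-(2 / f v v) • f v) v) = -1
  rw [LinearMap.transvection.det]
  simp only [LinearMap.smul_apply, smul_eq_mul]
  field_simp
  ring

theorem orthReflection_mem_orthGroup (hs : f.IsSymm) (v : V) :
    orthReflection f v ∈ orthGroup f := by
  intro x y
  simp only [orthReflection_apply, map_sub, map_smul, LinearMap.sub_apply, LinearMap.smul_apply,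
    smul_eq_mul]
  rw [hs.eq x v]
  rcases eq_or_ne (f v v) 0 with h | h
  · simp [h]
  · field_simp
    ring

theorem orthReflection_smul (v : V) {c : K} (hc : c ≠ 0) :
    orthReflection f (c • v) = orthReflection f v := by
  ext x
  simp only [orthReflection_apply, map_smul, LinearMap.smul_apply, smul_eq_mul, smul_smul]
  congr 2
  field_simp

theorem mul_orthReflection_mul_inv {g : V ≃ₗ[K] V} (hg : g ∈ orthGroup f) (v : V) :
    g * orthReflection f v * g⁻¹ = orthReflection f (g v) := by
  rw [mul_inv_eq_iff_eq_mul]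
  ext x
  simp only [LinearEquiv.mul_apply, orthReflection_apply, map_sub, map_smul, hg v v, hg v x]

theorem commute_orthReflection (hs : f.IsSymm) {v w : V} (h : f v w = 0) :
    Commute (orthReflection f v) (orthReflection f w) := by
  have h' : f w v = 0 := by rw [hs.eq, h]
  ext x
  simp only [LinearEquiv.mul_apply, orthReflection_apply, map_sub, map_smul, h, h', mul_zero]
  module

theorem orthReflection_sub_apply (hs : f.IsSymm) (h2 : (2 : K) ≠ 0) {v w : V}
    (hvw : f v w = 0) (hv : f v v ≠ 0) (heq : f v v = f w w) : orthReflection f (v - w) v = w := by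
  have hwv : f w v = 0 := by rw [hs.eq, hvw]
  have hself : f (v - w) (v - w) = 2 * f v v := by
    simp only [map_sub, LinearMap.sub_apply, hvw, hwv, ← heq]
    ring
  have hone : 2 / (2 * f v v) * f v v = 1 := by field_simp
  rw [orthReflection_apply, hself, map_sub, LinearMap.sub_apply, hwv, sub_zero, hone, one_smul,
    sub_sub_cancel]

/-- If `f w w = d² f v v`, the reflection in `d v - w` carries the reflection in `v` to the one
in `w`, so their product is a commutator. -/
theorem orthReflection_mul_mem_omegaGroup (hs : f.IsSymm) (h2 : (2 : K) ≠ 0) {v w : V}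
    (hvw : f v w = 0) (hv : f v v ≠ 0) (hw : f w w ≠ 0) (hsq : IsSquare (f v v * f w w)) :
    orthReflection f v * orthReflection f w ∈ omegaGroup f := by
  obtain ⟨c, hc⟩ := hsq
  have hd : c / f v v ≠ 0 := by
    rintro h
    simp_all
  set u := (c / f v v) • v
  have huu : f u u = f w w := by
    simp only [u, map_smul, LinearMap.smul_apply, smul_eq_mul]
    field_simp
    rw [sq, ← hc]
  have hcarry : orthReflection f (u - w) u = w :=
    orthReflection_sub_apply hs h2 (by simp [u, hvw]) (huu ▸ hw) huu
  have hg := orthReflection_mem_orthGroup hs (u - w)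
  have hconj := mul_orthReflection_mul_inv hg u
  rw [hcarry] at hconj
  have hcomm := Subgroup.commutator_mem_commutator (orthReflection_mem_orthGroup hs u) hg
  rwa [commutatorElement_def, orthReflection_inv u, mul_assoc, mul_assoc, ← mul_assoc _ _ (_⁻¹),
    hconj, orthReflection_smul v hd] at hcomm

end Reflection

section ReflectionProduct

variable {f : LinearMap.BilinForm K V} {l : List V}

theorem prod_orthReflection_mem_orthGroup (hs : f.IsSymm) (l : List V) :
    (l.map (orthReflection f)).prod ∈ orthGroup f := by
  refine Subgroup.list_prod_mem _ fun _ hg => ?_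
  obtain ⟨v, -, rfl⟩ := List.mem_map.1 hg
  exact orthReflection_mem_orthGroup hs v

theorem det_prod_orthReflection [FiniteDimensional K V] (hne : ∀ x ∈ l, f x x ≠ 0) :
    LinearMap.det ((l.map (orthReflection f)).prod : V →ₗ[K] V) = (-1) ^ l.length := by
  induction l with
  | nil => simp
  | cons v l ih =>
    rw [List.forall_mem_cons] at hne
    rw [List.map_cons, List.prod_cons, LinearEquiv.coe_toLinearMap_mul, map_mul, ih hne.2,
      det_orthReflection hne.1, List.length_cons, pow_succ']

theorem prod_orthReflection_apply_of_forall_eq_zero {x : V} (h : ∀ y ∈ l, f y x = 0) :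
    (l.map (orthReflection f)).prod x = x := by
  induction l with
  | nil => simp
  | cons v l ih =>
    rw [List.forall_mem_cons] at h
    rw [List.map_cons, List.prod_cons, LinearEquiv.mul_apply, ih h.2,
      orthReflection_apply_of_eq_zero h.1]

theorem prod_orthReflection_apply_of_mem (hs : f.IsSymm) (hp : l.Pairwise fun x y => f x y = 0)
    (hne : ∀ x ∈ l, f x x ≠ 0) {x : V} (hx : x ∈ l) :
    (l.map (orthReflection f)).prod x = -x := by
  induction l with
  | nil => simp at hx
  | cons v l ih =>
    rw [List.forall_mem_cons] at hne
    rw [List.pairwise_cons] at hp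
    rw [List.map_cons, List.prod_cons, LinearEquiv.mul_apply]
    rcases List.mem_cons.1 hx with rfl | hx
    · rw [prod_orthReflection_apply_of_forall_eq_zero fun y hy => by rw [hs.eq, hp.1 y hy],
        orthReflection_apply_self hne.1]
    · rw [ih hp.2 hne.2 hx, map_neg, orthReflection_apply_of_eq_zero (hp.1 x hx)]

theorem prod_orthReflection_apply_of_mem_span (hs : f.IsSymm)
    (hp : l.Pairwise fun x y => f x y = 0) (hne : ∀ x ∈ l, f x x ≠ 0) {x : V}
    (hx : x ∈ Submodule.span K {y | y ∈ l}) : (l.map (orthReflection f)).prod x = -x := by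
  have heq := LinearMap.eqOn_span (s := {y | y ∈ l})
    (f := ((l.map (orthReflection f)).prod : V →ₗ[K] V)) (g := -LinearMap.id)
    fun y hy => prod_orthReflection_apply_of_mem hs hp hne hy
  exact heq hx

theorem prod_orthReflection_mem_omegaGroup_of_pairwise_isSquare (hs : f.IsSymm)
    (h2 : (2 : K) ≠ 0) : ∀ {l : List V}, Even l.length → (l.Pairwise fun x y => f x y = 0) →
      (∀ x ∈ l, f x x ≠ 0) → (l.Pairwise fun x y => IsSquare (f x x * f y y)) →
      (l.map (orthReflection f)).prod ∈ omegaGroup f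
  | [], _, _, _, _ => one_mem _
  | [_], heven, _, _, _ => absurd heven (by simp)
  | v :: w :: l, heven, hp, hne, hsq => by
    simp only [List.pairwise_cons, List.forall_mem_cons] at hp hne hsq
    have heven' : Even l.length := by simpa [Nat.even_add_one] using heven
    rw [List.map_cons, List.map_cons, List.prod_cons, List.prod_cons, ← mul_assoc]
    exact mul_mem (orthReflection_mul_mem_omegaGroup hs h2 hp.1.1 hne.1 hne.2.1 hsq.1.1)
      (prod_orthReflection_mem_omegaGroup_of_pairwise_isSquare hs h2 heven' hp.2.2 hne.2.2 hsq.2.2)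

theorem isSquare_mul_of_not_isSquare [Finite K] {x y : K} (hx : ¬ IsSquare x)
    (hy : ¬ IsSquare y) : IsSquare (x * y) := by
  classical
  have := Fintype.ofFinite K
  have hx0 : x ≠ 0 := by rintro rfl; exact hx IsSquare.zero
  have hy0 : y ≠ 0 := by rintro rfl; exact hy IsSquare.zero
  rw [← quadraticChar_one_iff_isSquare (mul_ne_zero hx0 hy0), map_mul,
    quadraticChar_neg_one_iff_not_isSquare.2 hx, quadraticChar_neg_one_iff_not_isSquare.2 hy]
  rfl

variable [Fintype K] [DecidableEq K]

theorem quadraticChar_prod_eq_neg_one_pow {l : List K} (hne : ∀ x ∈ l, x ≠ 0) :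
    quadraticChar K l.prod = (-1) ^ (l.filter (¬ IsSquare ·)).length := by
  induction l with
  | nil => simp
  | cons x l ih =>
    rw [List.forall_mem_cons] at hne
    rw [List.prod_cons, map_mul, ih hne.2]
    by_cases hx : IsSquare x
    · simp [hx, (quadraticChar_one_iff_isSquare hne.1).2 hx]
    · simp [hx, quadraticChar_neg_one_iff_not_isSquare.2 hx, pow_succ']

/-- The numbers of square and of non-square norms in `l` are both even, and the reflections
commute, so the previous lemma applies to the two sublists. -/
theorem prod_orthReflection_mem_omegaGroup (hs : f.IsSymm) (h2 : (2 : K) ≠ 0)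
    (heven : Even l.length) (hp : l.Pairwise fun x y => f x y = 0) (hne : ∀ x ∈ l, f x x ≠ 0)
    (hdisc : quadraticChar K (l.map fun x => f x x).prod = 1) :
    (l.map (orthReflection f)).prod ∈ omegaGroup f := by
  set s := l.filter (fun x => IsSquare (f x x))
  set n := l.filter (fun x => ¬ IsSquare (f x x))
  have hperm : (s ++ n).Perm l := by
    simpa only [s, n, decide_not] using List.filter_append_perm (fun x => IsSquare (f x x)) l
  have hn : Even n.length := by
    rw [quadraticChar_prod_eq_neg_one_pow (by simpa using hne), List.filter_map,
      List.length_map] at hdisc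
    exact (neg_one_pow_eq_one_iff_even (by decide)).1 hdisc
  have hs' : Even s.length := by
    rw [← hperm.length_eq, List.length_append, Nat.even_add] at heven
    exact heven.2 hn
  have hcomm : ((s ++ n).map (orthReflection f)).Pairwise Commute :=
    List.pairwise_map.2 <| (hp.perm hperm.symm fun {x y} h => by rw [hs.eq, h]).imp
      fun h => commute_orthReflection hs h
  rw [← (hperm.map _).prod_eq' hcomm, List.map_append, List.prod_append]
  refine mul_mem
    (prod_orthReflection_mem_omegaGroup_of_pairwise_isSquare hs h2 hs' (hp.filter _)
      (fun x hx => hne x (List.mem_of_mem_filter hx)) ?_)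
    (prod_orthReflection_mem_omegaGroup_of_pairwise_isSquare hs h2 hn (hp.filter _)
      (fun x hx => hne x (List.mem_of_mem_filter hx)) ?_)
  · have hmem (x : V) (hx : x ∈ s) : IsSquare (f x x) := by simpa using List.of_mem_filter hx
    exact List.pairwise_of_forall_mem_list fun x hx y hy => (hmem x hx).mul (hmem y hy)
  · have hmem (x : V) (hx : x ∈ n) : ¬ IsSquare (f x x) := by simpa using List.of_mem_filter hx
    exact List.pairwise_of_forall_mem_list fun x hx y hy =>
      isSquare_mul_of_not_isSquare (hmem x hx) (hmem y hy)

end ReflectionProduct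

section NondegenerateSubspace

variable {f : LinearMap.BilinForm K V}

theorem restrict_nondegenerate_iff (hs : f.IsSymm) {W : Submodule K V} :
    (f.restrict W).Nondegenerate ↔ ∀ x ∈ W, (∀ y ∈ W, f x y = 0) → x = 0 := by
  constructor
  · intro h x hx hxy
    exact congrArg Subtype.val (h.1 ⟨x, hx⟩ fun y => hxy y y.2)
  · intro h
    have hleft : (f.restrict W).SeparatingLeft := fun x hx =>
      Subtype.ext (h x x.2 fun y hy => hx ⟨y, hy⟩)
    exact ⟨hleft, fun y hy => hleft y fun x => (hs.eq _ _).trans (hy x)⟩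

theorem restrict_map_subtype_nondegenerate_iff (hs : f.IsSymm) {W : Submodule K V}
    {U : Submodule K W} :
    (f.restrict (U.map W.subtype)).Nondegenerate ↔ ((f.restrict W).restrict U).Nondegenerate := by
  simp [restrict_nondegenerate_iff hs, restrict_nondegenerate_iff (hs.restrict W)]

theorem le_orthogonal_symm (hs : f.IsSymm) {A B : Submodule K V} (h : B ≤ f.orthogonal A) :
    A ≤ f.orthogonal B := fun x hx y hy => (hs.eq x y).symm.trans (h hy x hx)

theorem span_le_orthogonal_span {s t : Set V} (h : ∀ x ∈ s, ∀ y ∈ t, f x y = 0) :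
    Submodule.span K t ≤ f.orthogonal (Submodule.span K s) := by
  refine Submodule.span_le.2 fun y hy x hx => ?_
  have hle : Submodule.span K s ≤ LinearMap.ker (f.flip y) :=
    Submodule.span_le.2 fun z hz => h z hz y hy
  exact hle hx

theorem restrict_sup_nondegenerate (hs : f.IsSymm) {A B : Submodule K V}
    (hA : (f.restrict A).Nondegenerate) (hB : (f.restrict B).Nondegenerate)
    (hAB : B ≤ f.orthogonal A) : (f.restrict (A ⊔ B)).Nondegenerate := by
  rw [restrict_nondegenerate_iff hs] at *
  intro x hx hxy
  obtain ⟨a, ha, b, hb, rfl⟩ := Submodule.mem_sup.1 hx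
  have ha0 : a = 0 := hA a ha fun y hy => by
    have h := hxy y (Submodule.mem_sup_left hy)
    rwa [map_add, LinearMap.add_apply, hs.eq b y, hAB hb y hy, add_zero] at h
  have hb0 : b = 0 := hB b hb fun y hy => by
    have h := hxy y (Submodule.mem_sup_right hy)
    rwa [map_add, LinearMap.add_apply, hAB hy a ha, zero_add] at h
  rw [ha0, hb0, add_zero]

theorem restrict_nondegenerate_of_sup_eq (hs : f.IsSymm) {A B C : Submodule K V}
    (hC : (f.restrict C).Nondegenerate) (hAB : B ≤ f.orthogonal A) (hsup : A ⊔ B = C) :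
    (f.restrict B).Nondegenerate := by
  rw [restrict_nondegenerate_iff hs] at *
  intro x hx hxB
  refine hC x (hsup ▸ Submodule.mem_sup_right hx) fun y hy => ?_
  obtain ⟨a, ha, b, hb, rfl⟩ := Submodule.mem_sup.1 (hsup ▸ hy)
  rw [map_add, hxB b hb, hs.eq, hAB hx a ha, add_zero]

variable [FiniteDimensional K V]

theorem sup_inf_orthogonal_eq (hs : f.IsSymm) {W X : Submodule K V}
    (hW : (f.restrict W).Nondegenerate) (hWX : W ≤ X) : W ⊔ (X ⊓ f.orthogonal W) = X := by
  have hc := LinearMap.BilinForm.isCompl_orthogonal_of_restrict_nondegenerate hs.isRefl hW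
  rw [inf_comm, ← sup_inf_assoc_of_le _ hWX, hc.sup_eq_top, top_inf_eq]

theorem restrict_inf_orthogonal_nondegenerate (hs : f.IsSymm) {W X : Submodule K V}
    (hX : (f.restrict X).Nondegenerate) (hW : (f.restrict W).Nondegenerate) (hWX : W ≤ X) :
    (f.restrict (X ⊓ f.orthogonal W)).Nondegenerate :=
  restrict_nondegenerate_of_sup_eq hs hX inf_le_right (sup_inf_orthogonal_eq hs hW hWX)

theorem restrict_orthogonal_nondegenerate (hs : f.IsSymm) (hn : f.Nondegenerate)
    {W : Submodule K V} (hW : (f.restrict W).Nondegenerate) :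
    (f.restrict (f.orthogonal W)).Nondegenerate := by
  rw [LinearMap.BilinForm.restrict_nondegenerate_iff_isCompl_orthogonal hs.isRefl,
    LinearMap.BilinForm.orthogonal_orthogonal hn hs.isRefl]
  exact (LinearMap.BilinForm.isCompl_orthogonal_of_restrict_nondegenerate hs.isRefl hW).symm

theorem finrank_add_finrank_of_le_orthogonal (hs : f.IsSymm) {A B : Submodule K V}
    (hA : (f.restrict A).Nondegenerate) (hAB : B ≤ f.orthogonal A) :
    finrank K A + finrank K B = finrank K ↥(A ⊔ B) := by
  have hc := LinearMap.BilinForm.isCompl_orthogonal_of_restrict_nondegenerate hs.isRefl hA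
  have h := Submodule.finrank_sup_add_finrank_inf_eq A B
  rw [(hc.disjoint.mono_right hAB).eq_bot, finrank_bot, add_zero] at h
  exact h.symm

theorem exists_mem_forall_mem_apply_eq {X : Submodule K V}
    (hX : (f.restrict X).Nondegenerate) (g : V →ₗ[K] K) : ∃ y ∈ X, ∀ x ∈ X, f y x = g x := by
  let y := (LinearMap.BilinForm.toDual (f.restrict X) hX).symm (g ∘ₗ X.subtype)
  refine ⟨y, y.2, fun x hx => ?_⟩
  exact LinearMap.BilinForm.apply_toDual_symm_apply (hB := hX) (g ∘ₗ X.subtype) ⟨x, hx⟩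

theorem exists_dual_family {ι : Type*} {X I : Submodule K V} (hX : (f.restrict X).Nondegenerate)
    (hIX : I ≤ X) [DecidableEq ι] (b : Basis ι K I) :
    ∃ y : ι → V, (∀ j, y j ∈ X) ∧ ∀ i j, f (y j) (b i) = if i = j then 1 else 0 := by
  have hdual (j : ι) : ∃ y ∈ X, ∀ i, f y (b i) = if i = j then 1 else 0 := by
    obtain ⟨g, hg⟩ := LinearMap.exists_extend (b.coord j)
    obtain ⟨y, hyX, hy⟩ := exists_mem_forall_mem_apply_eq hX g
    refine ⟨y, hyX, fun i => ?_⟩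
    rw [hy _ (hIX (b i).2), ← I.subtype_apply, ← LinearMap.comp_apply, hg]
    simp [Finsupp.single_apply]
  choose y hyX hy using hdual
  exact ⟨y, hyX, fun i j => hy j i⟩

end NondegenerateSubspace

section Gram

variable {f : LinearMap.BilinForm K V} {ι : Type*} [Fintype ι] [DecidableEq ι]

theorem linearIndependent_of_det_gram_ne_zero {y : ι → V}
    (hdet : (Matrix.of fun i j => f (y i) (y j)).det ≠ 0) : LinearIndependent K y := by
  refine Fintype.linearIndependent_iff.2 fun c hc => congrFun ?_
  refine Matrix.eq_zero_of_vecMul_eq_zero hdet (funext fun j => ?_)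
  have h := congrArg (fun x => f x (y j)) hc
  simpa [Matrix.vecMul, dotProduct] using h

theorem exists_orthogonal_basis_prod_eq (hs : f.IsSymm) (h2 : (2 : K) ≠ 0)
    (b : Basis ι K V) : ∃ v : Basis ι K V, (∀ i j, i ≠ j → f (v i) (v j) = 0) ∧
      ∃ c ≠ 0, (LinearMap.BilinForm.toMatrix b f).det * c ^ 2 = ∏ i, f (v i) (v i) := by
  have := Module.Finite.of_basis b
  have : Invertible (2 : K) := invertibleOfNonzero h2
  obtain ⟨v₀, hv₀⟩ := LinearMap.BilinForm.exists_orthogonal_basis (B := f) ⟨hs.eq⟩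
  let v := v₀.reindex (Fintype.equivOfCardEq (by simp [finrank_eq_card_basis b]) : _ ≃ ι)
  have hv (i j : ι) (hij : i ≠ j) : f (v i) (v j) = 0 := by
    simpa [v] using hv₀ (by simpa using hij)
  refine ⟨v, hv, (b.toMatrix v).det, (b.isUnit_det v).ne_zero, ?_⟩
  have hdiag : LinearMap.BilinForm.toMatrix v f = Matrix.diagonal fun i => f (v i) (v i) := by
    ext i j
    rcases eq_or_ne i j with rfl | hij
    · simp
    · simp [hij, hv i j hij]
  have hdet := congrArg Matrix.det (LinearMap.BilinForm.toMatrix_mul_basis_toMatrix b v f)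
  rw [hdiag, Matrix.det_mul, Matrix.det_mul, Matrix.det_transpose, Matrix.det_diagonal] at hdet
  rw [← hdet]
  ring

end Gram

section Label

variable [Fintype K] [DecidableEq K]

/-- The subspace `M` is nondegenerate, its dimension has parity `e`, and its discriminant has
quadratic character `δ`. It is encoded by a list of anisotropic, pairwise orthogonal vectors
spanning `M`. -/
def HasLabel (f : LinearMap.BilinForm K V) (M : Submodule K V) (e : ZMod 2) (δ : ℤ) : Prop :=
  ∃ l : List V, (l.Pairwise fun x y => f x y = 0) ∧ (∀ x ∈ l, f x x ≠ 0) ∧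
    Submodule.span K {y | y ∈ l} = M ∧ (l.length : ZMod 2) = e ∧
    quadraticChar K (l.map fun x => f x x).prod = δ

variable {f : LinearMap.BilinForm K V} {M M' : Submodule K V} {e e' : ZMod 2} {δ δ' : ℤ}

theorem hasLabel_bot : HasLabel f ⊥ 0 1 := ⟨[], by simp⟩

theorem HasLabel.sup (hM : HasLabel f M e δ) (hM' : HasLabel f M' e' δ')
    (horth : M' ≤ f.orthogonal M) : HasLabel f (M ⊔ M') (e + e') (δ * δ') := by
  obtain ⟨l, hp, hne, rfl, rfl, rfl⟩ := hM
  obtain ⟨l', hp', hne', rfl, rfl, rfl⟩ := hM'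
  refine ⟨l ++ l', List.pairwise_append.2 ⟨hp, hp', fun x hx y hy =>
    horth (Submodule.subset_span hy) x (Submodule.subset_span hx)⟩,
    List.forall_mem_append.2 ⟨hne, hne'⟩, ?_, by simp,
    by rw [List.map_append, List.prod_append, map_mul]⟩
  rw [← Submodule.span_union]
  congr 1
  ext
  simp

theorem HasLabel.map_subtype {W : Submodule K V} {M : Submodule K W}
    (h : HasLabel (f.restrict W) M e δ) : HasLabel f (M.map W.subtype) e δ := by
  obtain ⟨l, hp, hne, rfl, he, hδ⟩ := h
  refine ⟨l.map W.subtype, List.pairwise_map.2 hp, ?_, ?_, by simpa using he, ?_⟩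
  · simpa using fun x hx hxl => hne ⟨x, hx⟩ hxl
  · rw [Submodule.map_span]
    congr 1
    ext
    simp
  · rw [List.map_map, ← hδ]
    rfl

theorem HasLabel.eq_one_or_neg_one (h : HasLabel f M e δ) : δ = 1 ∨ δ = -1 := by
  obtain ⟨l, -, hne, -, -, rfl⟩ := h
  exact quadraticChar_dichotomy (List.prod_ne_zero (by simpa using hne))

theorem hasLabel_top_of_basis (hs : f.IsSymm) (h2 : (2 : K) ≠ 0) {ι : Type*} [Fintype ι]
    [DecidableEq ι] (b : Basis ι K V) (hdet : (LinearMap.BilinForm.toMatrix b f).det ≠ 0) :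
    HasLabel f ⊤ (Fintype.card ι) (quadraticChar K (LinearMap.BilinForm.toMatrix b f).det) := by
  obtain ⟨v, hv, c, hc, hprod⟩ := exists_orthogonal_basis_prod_eq hs h2 b
  have hne : ∏ i, f (v i) (v i) ≠ 0 := hprod ▸ mul_ne_zero hdet (pow_ne_zero 2 hc)
  refine ⟨Finset.univ.toList.map v, ?_, ?_, ?_, by simp, ?_⟩
  · exact List.pairwise_map.2 (Finset.univ.nodup_toList.imp fun h => hv _ _ h)
  · simpa using fun i => Finset.prod_ne_zero_iff.1 hne i (Finset.mem_univ i)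
  · simpa [Set.range] using v.span_eq
  · rw [List.map_map, Function.comp_def, Finset.prod_map_toList, ← hprod, map_mul, map_pow,
      quadraticChar_sq_one hc, mul_one]

theorem hasLabel_span_of_det_gram_ne_zero (hs : f.IsSymm) (h2 : (2 : K) ≠ 0) {ι : Type*}
    [Fintype ι] [DecidableEq ι] {y : ι → V}
    (hdet : (Matrix.of fun i j => f (y i) (y j)).det ≠ 0) :
    HasLabel f (Submodule.span K (Set.range y)) (Fintype.card ι)
      (quadraticChar K (Matrix.of fun i j => f (y i) (y j)).det) := by
  let b := Basis.span (linearIndependent_of_det_gram_ne_zero hdet)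
  have hgram : LinearMap.BilinForm.toMatrix b (f.restrict _) =
      Matrix.of fun i j => f (y i) (y j) := by
    ext i j
    simp [b, Basis.span_apply]
  have h := (hasLabel_top_of_basis (hs.restrict _) h2 b (hgram ▸ hdet)).map_subtype
  rwa [hgram, Submodule.map_subtype_top] at h

theorem exists_hasLabel [FiniteDimensional K V] (hs : f.IsSymm) (h2 : (2 : K) ≠ 0)
    (hM : (f.restrict M).Nondegenerate) : ∃ δ, HasLabel f M (finrank K M) δ := by
  have h := hasLabel_top_of_basis (hs.restrict M) h2 (finBasis K M)
    ((LinearMap.BilinForm.nondegenerate_iff_det_ne_zero _).1 hM)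
  rw [Fintype.card_fin] at h
  exact ⟨_, by simpa using h.map_subtype⟩

theorem HasLabel.restrict_nondegenerate (hs : f.IsSymm) (h : HasLabel f M e δ) :
    (f.restrict M).Nondegenerate := by
  obtain ⟨l, hp, hne, rfl, -, -⟩ := h
  induction l with
  | nil => simp [restrict_nondegenerate_iff hs]
  | cons v l ih =>
    rw [List.forall_mem_cons] at hne
    rw [List.pairwise_cons] at hp
    have hset : {y | y ∈ v :: l} = {v} ∪ {y | y ∈ l} := by ext; simp
    rw [hset, Submodule.span_union]
    refine restrict_sup_nondegenerate hs ?_ (ih hp.2 hne.2)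
      (span_le_orthogonal_span (by simpa using hp.1))
    rw [restrict_nondegenerate_iff hs]
    intro x hx hxy
    obtain ⟨c, rfl⟩ := Submodule.mem_span_singleton.1 hx
    have hc : c = 0 := by simpa [hne.1] using hxy v (Submodule.mem_span_singleton_self v)
    rw [hc, zero_smul]

theorem quadraticChar_det_fromBlocks_zero_one_one (hm : IsSquare (-1 : K)) {ι : Type*} [Fintype ι]
    [DecidableEq ι] (D : Matrix ι ι K) :
    (Matrix.fromBlocks (0 : Matrix ι ι K) 1 1 D).det ≠ 0 ∧
      quadraticChar K (Matrix.fromBlocks (0 : Matrix ι ι K) 1 1 D).det = 1 := by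
  set J : Matrix (ι ⊕ ι) (ι ⊕ ι) K := Matrix.fromBlocks 0 1 1 0
  have hJ : J.det = 1 ∨ J.det = -1 := by
    rw [← mul_self_eq_one_iff, ← Matrix.det_mul, Matrix.fromBlocks_multiply]
    simp
  have hDJ : (Matrix.fromBlocks (0 : Matrix ι ι K) 1 1 D).det * J.det = 1 := by
    rw [← Matrix.det_mul, Matrix.fromBlocks_multiply]
    simp
  have hJchar : quadraticChar K J.det = 1 := by
    refine (quadraticChar_one_iff_isSquare (right_ne_zero_of_mul_eq_one hDJ)).2 ?_
    rcases hJ with h | h <;> rw [h]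
    exacts [IsSquare.one, hm]
  refine ⟨left_ne_zero_of_mul_eq_one hDJ, ?_⟩
  have h := congrArg (quadraticChar K) hDJ
  rwa [map_mul, hJchar, mul_one, map_one] at h

variable [FiniteDimensional K V]

theorem hasLabel_of_inf_orthogonal_le (hs : f.IsSymm) (h2 : (2 : K) ≠ 0) (hm : IsSquare (-1 : K))
    {X I : Submodule K V} (hX : (f.restrict X).Nondegenerate) (hIX : I ≤ X)
    (hI : I ≤ f.orthogonal I) (hXI : X ⊓ f.orthogonal I ≤ I) : HasLabel f X 0 1 := by
  let b := finBasis K I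
  obtain ⟨y, hyX, hy⟩ := exists_dual_family hX hIX b
  set z : Fin (finrank K I) ⊕ Fin (finrank K I) → V := Sum.elim (fun i => b i) y
  have hgram : (Matrix.of fun i j => f (z i) (z j)) =
      Matrix.fromBlocks 0 1 1 (Matrix.of fun i j => f (y i) (y j)) := by
    ext (i | i) (j | j)
    · exact hI (b j).2 _ (b i).2
    · simp [z, hs.eq (b i : V), hy, Matrix.one_apply]
    · simp [z, hy, Matrix.one_apply, eq_comm]
    · rfl
  obtain ⟨hdet, hchar⟩ := quadraticChar_det_fromBlocks_zero_one_one hm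
    (Matrix.of fun i j => f (y i) (y j))
  have hlabel := hasLabel_span_of_det_gram_ne_zero hs h2 (y := z) (hgram ▸ hdet)
  rw [hgram, hchar] at hlabel
  set Z := Submodule.span K (Set.range z)
  have hZX : Z ≤ X := Submodule.span_le.2 <| by
    rintro _ ⟨i | i, rfl⟩
    exacts [hIX (b i).2, hyX i]
  have hIZ : I ≤ Z := by
    have hspan := congrArg (Submodule.map I.subtype) b.span_eq
    rw [Submodule.map_subtype_top, Submodule.map_span] at hspan
    rw [← hspan]
    refine Submodule.span_mono ?_
    rintro _ ⟨_, ⟨i, rfl⟩, rfl⟩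
    exact ⟨Sum.inl i, rfl⟩
  have hle : X ⊓ f.orthogonal Z ≤ Z :=
    (inf_le_inf_left X (LinearMap.BilinForm.orthogonal_le hIZ)).trans (hXI.trans hIZ)
  have hXZ : Z = X := by
    rw [← sup_inf_orthogonal_eq hs (hlabel.restrict_nondegenerate hs) hZX, sup_eq_left.2 hle]
  rw [← hXZ]
  convert hlabel using 1
  rw [Fintype.card_sum, Nat.cast_add, CharTwo.add_self_eq_zero]

theorem HasLabel.of_inf_orthogonal_le_sup (hs : f.IsSymm) (h2 : (2 : K) ≠ 0)
    (hm : IsSquare (-1 : K)) {X I : Submodule K V} (hM : HasLabel f M e δ)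
    (hX : (f.restrict X).Nondegenerate) (hIX : I ≤ X) (hI : I ≤ f.orthogonal I) (hMX : M ≤ X)
    (hMI : M ≤ f.orthogonal I) (hXI : X ⊓ f.orthogonal I ≤ I ⊔ M) : HasLabel f X e δ := by
  have hM' := hM.restrict_nondegenerate hs
  have hIM : I ≤ f.orthogonal M := le_orthogonal_symm hs hMI
  have hdisj := LinearMap.BilinForm.isCompl_orthogonal_of_restrict_nondegenerate hs.isRefl hM'
  have hZI : X ⊓ f.orthogonal M ⊓ f.orthogonal I ≤ I :=
    calc X ⊓ f.orthogonal M ⊓ f.orthogonal I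
        ≤ (I ⊔ M) ⊓ f.orthogonal M := by
          rw [inf_right_comm]
          exact inf_le_inf_right _ hXI
      _ = I := by rw [sup_inf_assoc_of_le _ hIM, hdisj.inf_eq_bot, sup_bot_eq]
  have hZ := hasLabel_of_inf_orthogonal_le hs h2 hm
    (restrict_inf_orthogonal_nondegenerate hs hX hM' hMX) (le_inf hIX hIM) hI hZI
  have h := hM.sup hZ inf_le_right
  rwa [sup_inf_orthogonal_eq hs hM' hMX, add_zero, mul_one] at h

end Label

section CyclicSubspace

variable {a : Module.End K V} {v x : V} {p : K[X]}

theorem aeval_mul_apply (a : Module.End K V) (r s : K[X]) (v : V) :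
    aeval a (r * s) v = aeval a r (aeval a s v) := by
  rw [map_mul, Module.End.mul_apply]

theorem aeval_mul_apply_eq_zero (h : aeval a p v = 0) (r : K[X]) : aeval a (p * r) v = 0 := by
  rw [mul_comm, aeval_mul_apply, h, map_zero]

theorem cycSub_eq_range (a : Module.End K V) (v : V) :
    cycSub a v = LinearMap.range (LinearMap.applyₗ v ∘ₗ (aeval a).toLinearMap) := by
  rw [cycSub, LinearMap.range_eq_map, ← (basisMonomials K).span_eq, Submodule.map_span,
    ← Set.range_comp]
  simp [Function.comp_def, aeval_monomial]

theorem mem_cycSub : x ∈ cycSub a v ↔ ∃ r : K[X], aeval a r v = x := by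
  simp [cycSub_eq_range]

theorem aeval_mem_cycSub (a : Module.End K V) (v : V) (r : K[X]) : aeval a r v ∈ cycSub a v :=
  mem_cycSub.2 ⟨r, rfl⟩

theorem self_mem_cycSub (a : Module.End K V) (v : V) : v ∈ cycSub a v :=
  mem_cycSub.2 ⟨1, by simp⟩

theorem mem_cycSub_aeval : x ∈ cycSub a (aeval a p v) ↔ ∃ r : K[X], aeval a (p * r) v = x := by
  simp only [mem_cycSub, mul_comm p, aeval_mul_apply]

theorem cycSub_aeval_le (a : Module.End K V) (v : V) (p : K[X]) :
    cycSub a (aeval a p v) ≤ cycSub a v := fun _ hx => by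
  obtain ⟨r, rfl⟩ := mem_cycSub_aeval.1 hx
  exact aeval_mem_cycSub a v _

theorem invt_cycSub (a : Module.End K V) (v : V) : Invt a (cycSub a v) := fun x hx => by
  obtain ⟨r, rfl⟩ := mem_cycSub.1 hx
  exact mem_cycSub.2 ⟨X * r, by simp⟩

theorem finrank_cycSub (h : ∀ r, aeval a r v = 0 ↔ p ∣ r) :
    finrank K (cycSub a v) = p.natDegree := by
  let L := LinearMap.applyₗ v ∘ₗ (aeval a : K[X] →ₐ[K] Module.End K V).toLinearMap
  have hker : LinearMap.ker L = (Ideal.span {p}).restrictScalars K := by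
    ext r
    simp [L, h, Ideal.mem_span_singleton]
  let e := (Submodule.quotEquivOfEq _ _ hker).trans
    (Submodule.Quotient.restrictScalarsEquiv K (Ideal.span {p}))
  rw [cycSub_eq_range, ← finrank_quotient_span_eq_natDegree (K := K), ← e.finrank_eq]
  exact L.quotKerEquivRange.finrank_eq.symm

end CyclicSubspace

section ExactPair

theorem pow_dvd_of_mem_of_forall_pow_notMem {R : Type*} [CommRing R] [IsDomain R]
    [IsPrincipalIdealRing R] {I : Ideal R} {π r : R} {t : ℕ} (hπ : Prime π) (ht : π ^ t ∈ I)
    (hmin : ∀ s < t, π ^ s ∉ I) (hr : r ∈ I) : π ^ t ∣ r := by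
  obtain ⟨g, rfl⟩ := IsPrincipalIdealRing.principal I
  rw [Ideal.submodule_span_eq, Ideal.mem_span_singleton] at *
  obtain ⟨s, hst, hs⟩ := (dvd_prime_pow hπ t).1 ht
  obtain rfl : s = t := by
    by_contra hne
    exact hmin s (by omega) (Ideal.mem_span_singleton.2 hs.dvd)
  exact hs.symm.dvd.trans hr

/-- The polynomial `p` kills `v` and `w`, and the pairing `(r, s) ↦ f (r(a) v) (s(a) w)` is
perfect on `K[X] / (p)`. -/
structure IsExactPair (f : LinearMap.BilinForm K V) (a : Module.End K V) (p : K[X])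
    (v w : V) : Prop where
  left : aeval a p v = 0
  right : aeval a p w = 0
  dvd : ∀ r : K[X], (∀ s : K[X], f (aeval a (r * s) v) w = 0) → p ∣ r

variable {f : LinearMap.BilinForm K V} {a : Module.End K V} {p : K[X]} {v w : V}

theorem isExactPair_of_ne_zero {π h : K[X]} (hπ : Irreducible π) {n : ℕ}
    (hv : aeval a (π ^ (n + 1)) v = 0) (hw : aeval a (π ^ (n + 1)) w = 0)
    (hne : f (aeval a (π ^ n * h) v) w ≠ 0) : IsExactPair f a (π ^ (n + 1)) v w := by
  refine ⟨hv, hw, fun r hr => ?_⟩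
  let I : Ideal K[X] :=
    { carrier := {r | ∀ s : K[X], f (aeval a (r * s) v) w = 0}
      add_mem' := fun hx hy s => by
        rw [add_mul, map_add, LinearMap.add_apply, map_add, LinearMap.add_apply, hx, hy, add_zero]
      zero_mem' := fun s => by simp
      smul_mem' := fun c x hx s => by rw [smul_eq_mul, mul_comm c, mul_assoc, hx] }
  refine pow_dvd_of_mem_of_forall_pow_notMem (I := I) hπ.prime (fun s => ?_)
    (fun s hs hmem => ?_) hr
  · rw [aeval_mul_apply_eq_zero hv, map_zero, LinearMap.zero_apply]
  · refine hne ?_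
    rw [← Nat.add_sub_of_le (Nat.le_of_lt_succ hs), pow_add, mul_assoc]
    exact hmem _

theorem apply_aeval_left (ha : f.IsSelfAdjoint a) (r : K[X]) (x y : V) :
    f (aeval a r x) y = f x (aeval a r y) := by
  induction r using Polynomial.induction_on' with
  | add p q hp hq => simp [hp, hq]
  | monomial n c =>
    have hpow : f ((a ^ n) x) y = f x ((a ^ n) y) := by
      induction n generalizing x y with
      | zero => rfl
      | succ n ih =>
        rw [pow_succ, Module.End.mul_apply, ih, ha, ← Module.End.mul_apply, ← pow_succ',
          ← pow_succ]
    simp [aeval_monomial, hpow]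

theorem apply_aeval_aeval (ha : f.IsSelfAdjoint a) (r s : K[X]) (x y : V) :
    f (aeval a r x) (aeval a s y) = f (aeval a (r * s) x) y := by
  rw [mul_comm, aeval_mul_apply, apply_aeval_left ha s]

theorem cycSub_le_orthogonal_cycSub (ha : f.IsSelfAdjoint a)
    (h : ∀ r : K[X], f (aeval a r v) w = 0) : cycSub a w ≤ f.orthogonal (cycSub a v) := by
  intro y hy x hx
  obtain ⟨s, rfl⟩ := mem_cycSub.1 hy
  obtain ⟨r, rfl⟩ := mem_cycSub.1 hx
  exact (apply_aeval_aeval ha r s v w).trans (h _)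

namespace IsExactPair

theorem symm (hs : f.IsSymm) (ha : f.IsSelfAdjoint a) (h : IsExactPair f a p v w) :
    IsExactPair f a p w v :=
  ⟨h.right, h.left, fun r hr => h.dvd r fun s => by rw [apply_aeval_left ha, hs.eq, hr]⟩

theorem aeval_eq_zero_iff (h : IsExactPair f a p v w) (r : K[X]) : aeval a r v = 0 ↔ p ∣ r := by
  refine ⟨fun hr => h.dvd r fun s => ?_, ?_⟩
  · rw [aeval_mul_apply_eq_zero hr, map_zero, LinearMap.zero_apply]
  · rintro ⟨s, rfl⟩
    exact aeval_mul_apply_eq_zero h.left s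

theorem finrank_cycSub (h : IsExactPair f a p v w) : finrank K (cycSub a v) = p.natDegree :=
  Biref.finrank_cycSub h.aeval_eq_zero_iff

theorem dvd_mul_of_forall_mem (ha : f.IsSelfAdjoint a) (h : IsExactPair f a p v w)
    {q r : K[X]} (hr : ∀ y ∈ cycSub a (aeval a q w), f (aeval a r v) y = 0) : p ∣ r * q :=
  h.dvd _ fun s => by
    rw [mul_assoc, ← apply_aeval_aeval ha]
    exact hr _ (mem_cycSub_aeval.2 ⟨s, rfl⟩)

theorem eq_zero_of_forall_mem (ha : f.IsSelfAdjoint a) (h : IsExactPair f a p v w)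
    {x : V} (hx : x ∈ cycSub a v) (hxy : ∀ y ∈ cycSub a w, f x y = 0) : x = 0 := by
  obtain ⟨r, rfl⟩ := mem_cycSub.1 hx
  rw [h.aeval_eq_zero_iff, ← mul_one r]
  exact h.dvd_mul_of_forall_mem ha (by simpa using hxy)

theorem restrict_cycSub_nondegenerate (hs : f.IsSymm) (ha : f.IsSelfAdjoint a)
    (h : IsExactPair f a p v v) : (f.restrict (cycSub a v)).Nondegenerate :=
  (restrict_nondegenerate_iff hs).2 fun _ hx hxy => h.eq_zero_of_forall_mem ha hx hxy

theorem sup_inf_orthogonal_le (hs : f.IsSymm) (ha : f.IsSelfAdjoint a)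
    (h : IsExactPair f a p v w) (hw : cycSub a w ≤ f.orthogonal (cycSub a w)) :
    (cycSub a v ⊔ cycSub a w) ⊓ f.orthogonal (cycSub a w) ≤ cycSub a w := by
  rintro x ⟨hx, hxw⟩
  obtain ⟨y, hy, z, hz, rfl⟩ := Submodule.mem_sup.1 hx
  have hy0 : y = 0 := h.eq_zero_of_forall_mem ha hy fun u hu => by
    have hyz : f u (y + z) = 0 := hxw u hu
    rwa [map_add, show f u z = 0 from hw hz u hu, add_zero, hs.eq] at hyz
  rwa [hy0, zero_add]

theorem restrict_sup_nondegenerate (hs : f.IsSymm) (ha : f.IsSelfAdjoint a)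
    (h : IsExactPair f a p v w) (hw : cycSub a w ≤ f.orthogonal (cycSub a w)) :
    (f.restrict (cycSub a v ⊔ cycSub a w)).Nondegenerate := by
  refine (restrict_nondegenerate_iff hs).2 fun x hx hxy => ?_
  refine (h.symm hs ha).eq_zero_of_forall_mem ha (h.sup_inf_orthogonal_le hs ha hw ⟨hx, ?_⟩)
    fun y hy => hxy y (Submodule.mem_sup_left hy)
  exact fun y hy => (hs.eq _ _).trans (hxy y (Submodule.mem_sup_right hy))

theorem finrank_sup [FiniteDimensional K V] (hs : f.IsSymm) (ha : f.IsSelfAdjoint a)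
    (h : IsExactPair f a p v w) (hw : cycSub a w ≤ f.orthogonal (cycSub a w)) :
    finrank K ↥(cycSub a v ⊔ cycSub a w) = 2 * p.natDegree := by
  have hdisj : cycSub a v ⊓ cycSub a w = ⊥ := (Submodule.eq_bot_iff _).2 fun x hx =>
    h.eq_zero_of_forall_mem ha hx.1 fun y hy => (hs.eq _ _).trans (hw hx.2 y hy)
  have hsum := Submodule.finrank_sup_add_finrank_inf_eq (cycSub a v) (cycSub a w)
  rw [hdisj, finrank_bot, h.finrank_cycSub, (h.symm hs ha).finrank_cycSub] at hsum
  omega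

theorem cycSub_aeval_le_orthogonal (ha : f.IsSelfAdjoint a) (h : IsExactPair f a p v w)
    {q r : K[X]} (hqr : p ∣ q * r) :
    cycSub a (aeval a r w) ≤ f.orthogonal (cycSub a (aeval a q v)) :=
  cycSub_le_orthogonal_cycSub ha fun s => by
    rw [apply_aeval_aeval ha, ← aeval_mul_apply, mul_assoc,
      (h.aeval_eq_zero_iff _).2 (mul_comm q r ▸ hqr.mul_left s), map_zero, LinearMap.zero_apply]

theorem cycSub_inf_orthogonal_le (hs : f.IsSymm) (ha : f.IsSelfAdjoint a) {q r : K[X]}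
    (hr : r ≠ 0) (h : IsExactPair f a (q * r) v w) :
    cycSub a v ⊓ f.orthogonal (cycSub a (aeval a r w)) ≤ cycSub a (aeval a q v) := by
  rintro x ⟨hx, hxr⟩
  obtain ⟨u, rfl⟩ := mem_cycSub.1 hx
  have hdvd : q * r ∣ u * r := h.dvd_mul_of_forall_mem ha fun y hy => (hs.eq _ _).trans (hxr y hy)
  obtain ⟨u, rfl⟩ := (mul_dvd_mul_iff_right hr).1 hdvd
  exact mem_cycSub_aeval.2 ⟨u, rfl⟩

variable [Fintype K] [DecidableEq K] [FiniteDimensional K V]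

theorem hasLabel_sup (hs : f.IsSymm) (ha : f.IsSelfAdjoint a) (h2 : (2 : K) ≠ 0)
    (hm : IsSquare (-1 : K)) (h : IsExactPair f a p v w)
    (hw : cycSub a w ≤ f.orthogonal (cycSub a w)) :
    HasLabel f (cycSub a v ⊔ cycSub a w) 0 1 :=
  hasLabel_of_inf_orthogonal_le hs h2 hm (h.restrict_sup_nondegenerate hs ha hw) le_sup_right hw
    (h.sup_inf_orthogonal_le hs ha hw)

theorem hasLabel_cycSub_of_mul_self (hs : f.IsSymm) (ha : f.IsSelfAdjoint a) (h2 : (2 : K) ≠ 0)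
    (hm : IsSquare (-1 : K)) {q : K[X]} (hq : q ≠ 0) (h : IsExactPair f a (q * q) v v) :
    HasLabel f (cycSub a v) 0 1 :=
  hasLabel_of_inf_orthogonal_le hs h2 hm (h.restrict_cycSub_nondegenerate hs ha)
    (cycSub_aeval_le a v q) (h.cycSub_aeval_le_orthogonal ha dvd_rfl)
    (h.cycSub_inf_orthogonal_le hs ha hq)

end IsExactPair

end ExactPair

section MulForm

variable {F ι : Type*} [Field F] [Algebra K F]

/-- The bilinear form `(x, y) ↦ μ (x * y)` attached to a linear functional on a field extension. -/
def mulForm (μ : F →ₗ[K] K) : LinearMap.BilinForm K F := (LinearMap.mul K F).compr₂ μ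

theorem mulForm_apply (μ : F →ₗ[K] K) (x y : F) : mulForm μ x y = μ (x * y) := rfl

theorem mulForm_nondegenerate {μ : F →ₗ[K] K} (hμ : μ ≠ 0) : (mulForm μ).Nondegenerate := by
  have hleft : (mulForm μ).SeparatingLeft := fun x hx => by
    by_contra hne
    refine hμ (LinearMap.ext fun y => ?_)
    simpa [mulForm_apply, mul_inv_cancel_left₀ hne] using hx (x⁻¹ * y)
  exact ⟨hleft, fun y hy => hleft y fun x => by rw [mulForm_apply, mul_comm]; exact hy x⟩

theorem det_toMatrix_mulForm_comp_mulLeft [Fintype ι] [DecidableEq ι] (b : Basis ι K F)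
    (μ : F →ₗ[K] K) (c : F) :
    (LinearMap.BilinForm.toMatrix b (mulForm (μ ∘ₗ LinearMap.mulLeft K c))).det =
      Algebra.norm K c * (LinearMap.BilinForm.toMatrix b (mulForm μ)).det := by
  have hcomp : mulForm (μ ∘ₗ LinearMap.mulLeft K c) =
      (mulForm μ).compLeft (LinearMap.mulLeft K c) := by
    ext x y
    simp [mulForm_apply, mul_assoc]
  rw [hcomp, LinearMap.BilinForm.toMatrix_compLeft, Matrix.det_mul, Matrix.det_transpose,
    LinearMap.det_toMatrix, Algebra.norm_apply]
  rfl

end MulForm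

section ResidueForm

variable {f : LinearMap.BilinForm K V} {a : Module.End K V} {π q : K[X]} {v : V}

theorem exists_residueForm (hπ : π.Monic) (h : aeval a (q * (q * π)) v = 0) :
    ∃ μ : AdjoinRoot π →ₗ[K] K,
      ∀ g, μ (AdjoinRoot.mk π g) = f (aeval a (q * q * g) v) v := by
  refine ⟨f.flip v ∘ₗ LinearMap.applyₗ v ∘ₗ (aeval a).toLinearMap ∘ₗ
    LinearMap.mulLeft K (q * q) ∘ₗ AdjoinRoot.modByMonicHom hπ, fun g => ?_⟩
  have hg : q * q * g = q * q * (g %ₘ π) + q * (q * π) * (g /ₘ π) := by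
    linear_combination (-(q * q)) * modByMonic_add_div g π
  rw [hg, map_add, LinearMap.add_apply, aeval_mul_apply_eq_zero h, add_zero]
  simp [AdjoinRoot.modByMonicHom_mk]

theorem powerBasis'_basis_apply (hπ : π.Monic) (i : Fin (AdjoinRoot.powerBasis' hπ).dim) :
    (AdjoinRoot.powerBasis' hπ).basis i = AdjoinRoot.mk π (X ^ (i : ℕ)) := by
  simp [PowerBasis.basis_eq_pow]

theorem cycSub_aeval_le_sup_span (hπ : π.Monic) (a : Module.End K V) (q : K[X]) (v : V) :
    cycSub a (aeval a q v) ≤ cycSub a (aeval a (q * π) v) ⊔ Submodule.span K (Set.range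
      fun i : Fin (AdjoinRoot.powerBasis' hπ).dim => aeval a (q * X ^ (i : ℕ)) v) := by
  intro x hx
  obtain ⟨r, rfl⟩ := mem_cycSub_aeval.1 hx
  set b := (AdjoinRoot.powerBasis' hπ).basis
  have hdvd : π ∣ r - ∑ i, C (b.repr (AdjoinRoot.mk π r) i) * X ^ (i : ℕ) := by
    rw [← AdjoinRoot.mk_eq_mk]
    conv_lhs => rw [← b.sum_repr (AdjoinRoot.mk π r)]
    simp only [map_sum, map_mul, b, powerBasis'_basis_apply, Algebra.smul_def,
      AdjoinRoot.algebraMap_eq, AdjoinRoot.mk_C]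
  obtain ⟨u, hu⟩ := hdvd
  have hr : q * r = q * π * u +
      ∑ i, C (b.repr (AdjoinRoot.mk π r) i) * (q * X ^ (i : ℕ)) := by
    rw [mul_assoc, ← hu, mul_sub, Finset.mul_sum]
    simp only [mul_left_comm q, sub_add_cancel]
  rw [hr, map_add, LinearMap.add_apply]
  refine Submodule.add_mem_sup (mem_cycSub_aeval.2 ⟨u, rfl⟩) ?_
  rw [map_sum, LinearMap.sum_apply]
  refine Submodule.sum_mem _ fun i _ => ?_
  rw [aeval_mul_apply, aeval_C, Module.algebraMap_end_apply]
  exact Submodule.smul_mem _ _ (Submodule.subset_span ⟨i, rfl⟩)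

theorem IsExactPair.residueForm_ne_zero (hπ : Irreducible π) (hq : q ≠ 0)
    (h : IsExactPair f a (q * (q * π)) v v) {μ : AdjoinRoot π →ₗ[K] K}
    (hμ : ∀ g, μ (AdjoinRoot.mk π g) = f (aeval a (q * q * g) v) v) : μ ≠ 0 := by
  rintro rfl
  have hdvd : q * (q * π) ∣ q * q := h.dvd _ fun s => (hμ s).symm
  have hπ1 : q * q * π ∣ q * q * 1 := by rwa [mul_one, mul_assoc]
  exact hπ.not_isUnit (isUnit_of_dvd_one ((mul_dvd_mul_iff_left (mul_ne_zero hq hq)).1 hπ1))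

variable [Fintype K] [DecidableEq K] [FiniteDimensional K V]

theorem IsExactPair.hasLabel_cycSub_of_mul_mul [Fact (Irreducible π)] (hs : f.IsSymm)
    (ha : f.IsSelfAdjoint a) (h2 : (2 : K) ≠ 0) (hm : IsSquare (-1 : K)) (hπ : π.Monic)
    (hq : q ≠ 0) (h : IsExactPair f a (q * (q * π)) v v) {μ : AdjoinRoot π →ₗ[K] K}
    (hμ : ∀ g, μ (AdjoinRoot.mk π g) = f (aeval a (q * q * g) v) v) :
    HasLabel f (cycSub a v) π.natDegree (quadraticChar K
      (LinearMap.BilinForm.toMatrix (AdjoinRoot.powerBasis' hπ).basis (mulForm μ)).det) := by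
  set y : Fin (AdjoinRoot.powerBasis' hπ).dim → V := fun i => aeval a (q * X ^ (i : ℕ)) v
  have hgram : (Matrix.of fun i j => f (y i) (y j)) =
      LinearMap.BilinForm.toMatrix (AdjoinRoot.powerBasis' hπ).basis (mulForm μ) := by
    ext i j
    rw [LinearMap.BilinForm.toMatrix_apply, mulForm_apply, powerBasis'_basis_apply,
      powerBasis'_basis_apply, ← map_mul, hμ, Matrix.of_apply, apply_aeval_aeval ha,
      mul_mul_mul_comm]
  have hdet := (LinearMap.BilinForm.nondegenerate_iff_det_ne_zero
    (AdjoinRoot.powerBasis' hπ).basis).1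
      (mulForm_nondegenerate (h.residueForm_ne_zero Fact.out hq hμ))
  have hY := hasLabel_span_of_det_gram_ne_zero hs h2 (hgram ▸ hdet)
  rw [hgram, Fintype.card_fin] at hY
  change HasLabel f _ (π.natDegree : ZMod 2) _ at hY
  have hYq : Submodule.span K (Set.range y) ≤ cycSub a (aeval a q v) := Submodule.span_le.2 <| by
    rintro _ ⟨i, rfl⟩
    exact mem_cycSub_aeval.2 ⟨_, rfl⟩
  have hqπ : cycSub a (aeval a (q * π) v) ≤ f.orthogonal (cycSub a (aeval a q v)) :=
    h.cycSub_aeval_le_orthogonal ha dvd_rfl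
  refine hY.of_inf_orthogonal_le_sup hs h2 hm (h.restrict_cycSub_nondegenerate hs ha)
    (cycSub_aeval_le a v (q * π)) ?_ (hYq.trans (cycSub_aeval_le a v q))
    (hYq.trans (le_orthogonal_symm hs hqπ)) ?_
  · exact h.cycSub_aeval_le_orthogonal ha ⟨π, by ring⟩
  · exact (h.cycSub_inf_orthogonal_le hs ha (mul_ne_zero hq hπ.ne_zero)).trans
      (cycSub_aeval_le_sup_span hπ a q v)

end ResidueForm

section IsometryParts

/-- The relations satisfied by the self-adjoint part `a = φ + φ⁻¹` and the skew-adjoint part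
`N = φ - φ⁻¹` of an isometry `φ` of a symmetric form. Away from characteristic two `φ` and
`φ⁻¹` are recovered as `(a ± N) / 2`, so `φ` is reversed by the isometries commuting with `a` and
anticommuting with `N`. -/
structure IsometryParts (f : LinearMap.BilinForm K V) (a N : Module.End K V) : Prop where
  isSymm : f.IsSymm
  isSelfAdjoint : f.IsSelfAdjoint a
  isSkewAdjoint : f.IsSkewAdjoint N
  commute : Commute N a
  sq : N ^ 2 = a ^ 2 - 4

variable {f : LinearMap.BilinForm K V} {a N : Module.End K V}

namespace IsometryParts

theorem apply_aeval (D : IsometryParts f a N) (r : K[X]) (x : V) :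
    N (aeval a r x) = aeval a r (N x) :=
  LinearMap.congr_fun (Algebra.commute_of_mem_adjoin_singleton_of_commute
    (aeval_mem_adjoin_singleton K a) D.commute) x

theorem apply_apply (D : IsometryParts f a N) (x : V) :
    N (N x) = aeval a (X ^ 2 - C 4 : K[X]) x := by
  have h : aeval a (X ^ 2 - C 4 : K[X]) = N ^ 2 := by
    simp only [map_sub, map_pow, aeval_X, map_ofNat, D.sq]
  rw [h, pow_two, Module.End.mul_apply]

theorem form_aeval_apply (D : IsometryParts f a N) (r : K[X]) (x y : V) :
    f (aeval a r x) (N y) = -f (aeval a r (N x)) y := by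
  rw [← D.apply_aeval, D.isSkewAdjoint, Pi.neg_apply, map_neg, neg_neg]

theorem form_aeval_apply_apply (D : IsometryParts f a N) (r : K[X]) (x y : V) :
    f (aeval a r (N x)) (N y) = -f (aeval a (r * (X ^ 2 - C 4)) x) y := by
  rw [D.form_aeval_apply, D.apply_apply, aeval_mul_apply]

theorem form_aeval_apply_self (D : IsometryParts f a N) (h2 : (2 : K) ≠ 0) (r : K[X]) (x : V) :
    f (aeval a r (N x)) x = 0 := by
  have h : f (aeval a r (N x)) x = -f (aeval a r (N x)) x := by
    rw [← D.form_aeval_apply, apply_aeval_left D.isSelfAdjoint, D.isSymm.eq]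
  have h' : 2 * f (aeval a r (N x)) x = 0 := by linear_combination h
  exact (mul_eq_zero.1 h').resolve_left h2

theorem restrict (D : IsometryParts f a N) {W : Submodule K V} (ha : Invt a W) (hN : Invt N W) :
    IsometryParts (f.restrict W) (a.restrict ha) (N.restrict hN) where
  isSymm := ⟨fun x y => D.isSymm.eq x y⟩
  isSelfAdjoint x y := D.isSelfAdjoint x y
  isSkewAdjoint x y := D.isSkewAdjoint x y
  commute := LinearMap.ext fun x => Subtype.ext (LinearMap.congr_fun D.commute (x : V))
  sq := LinearMap.ext fun x => Subtype.ext (LinearMap.congr_fun D.sq (x : V))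

end IsometryParts

theorem invt_orthogonal_of_isAdjointPair {g h : Module.End K V} (hgh : f.IsAdjointPair f g h)
    {W : Submodule K V} (hg : Invt g W) : Invt h (f.orthogonal W) := fun x hx y hy =>
  (hgh y x).symm.trans (hx _ (hg y hy))

theorem IsometryParts.invt_orthogonal (D : IsometryParts f a N) {W : Submodule K V}
    (ha : Invt a W) (hN : Invt N W) :
    Invt a (f.orthogonal W) ∧ Invt N (f.orthogonal W) := by
  refine ⟨invt_orthogonal_of_isAdjointPair D.isSelfAdjoint ha, fun x hx => ?_⟩
  exact neg_mem_iff.1 (invt_orthogonal_of_isAdjointPair (h := -N) D.isSkewAdjoint hN x hx)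

end IsometryParts

section SwapPair

/-- Orthogonal `a`-invariant subspaces interchanged by `N`. If they span the space, they are the
`1`- and `-1`-eigenspaces of an involution that commutes with `a` and anticommutes with `N`. -/
structure IsSwapPair (f : LinearMap.BilinForm K V) (a N : Module.End K V)
    (P M : Submodule K V) : Prop where
  le_orthogonal : M ≤ f.orthogonal P
  invt_left : Invt a P
  invt_right : Invt a M
  le_comap_left : P ≤ M.comap N
  le_comap_right : M ≤ P.comap N

variable {f : LinearMap.BilinForm K V} {a N : Module.End K V} {P M P' M' : Submodule K V}

theorem sup_le_comap_sup {g : Module.End K V} (h : P ≤ M.comap g) (h' : P' ≤ M'.comap g) :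
    P ⊔ P' ≤ (M ⊔ M').comap g :=
  sup_le (h.trans (Submodule.comap_mono le_sup_left))
    (h'.trans (Submodule.comap_mono le_sup_right))

theorem sup_le_orthogonal_sup (hs : f.IsSymm) (h : M ≤ f.orthogonal P)
    (h' : M' ≤ f.orthogonal P') (hPM' : M' ≤ f.orthogonal P) (hP'M : M ≤ f.orthogonal P') :
    M ⊔ M' ≤ f.orthogonal (P ⊔ P') :=
  le_orthogonal_symm hs <| sup_le (le_orthogonal_symm hs (sup_le h hPM'))
    (le_orthogonal_symm hs (sup_le hP'M h'))

namespace IsSwapPair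

theorem symm (hs : f.IsSymm) (h : IsSwapPair f a N P M) : IsSwapPair f a N M P :=
  ⟨le_orthogonal_symm hs h.le_orthogonal, h.invt_right, h.invt_left, h.le_comap_right,
    h.le_comap_left⟩

theorem sup (hs : f.IsSymm) (h : IsSwapPair f a N P M) (h' : IsSwapPair f a N P' M')
    (hPM' : M' ≤ f.orthogonal P) (hP'M : M ≤ f.orthogonal P') :
    IsSwapPair f a N (P ⊔ P') (M ⊔ M') where
  le_orthogonal := sup_le_orthogonal_sup hs h.le_orthogonal h'.le_orthogonal hPM' hP'M
  invt_left := sup_le_comap_sup h.invt_left h'.invt_left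
  invt_right := sup_le_comap_sup h.invt_right h'.invt_right
  le_comap_left := sup_le_comap_sup h.le_comap_left h'.le_comap_left
  le_comap_right := sup_le_comap_sup h.le_comap_right h'.le_comap_right

theorem map_subtype {W : Submodule K V} {ha : Invt a W} {hN : Invt N W} {P M : Submodule K W}
    (h : IsSwapPair (f.restrict W) (a.restrict ha) (N.restrict hN) P M) :
    IsSwapPair f a N (P.map W.subtype) (M.map W.subtype) where
  le_orthogonal := by
    rintro _ ⟨m, hm, rfl⟩ _ ⟨p, hp, rfl⟩
    exact h.le_orthogonal hm p hp
  invt_left := by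
    rintro _ ⟨p, hp, rfl⟩
    exact ⟨_, h.invt_left p hp, rfl⟩
  invt_right := by
    rintro _ ⟨m, hm, rfl⟩
    exact ⟨_, h.invt_right m hm, rfl⟩
  le_comap_left := by
    rintro _ ⟨p, hp, rfl⟩
    exact ⟨_, h.le_comap_left hp, rfl⟩
  le_comap_right := by
    rintro _ ⟨m, hm, rfl⟩
    exact ⟨_, h.le_comap_right hm, rfl⟩

end IsSwapPair

theorem isSwapPair_bot : IsSwapPair f a N ⊥ ⊥ :=
  ⟨bot_le, by simp [Invt], by simp [Invt], bot_le, bot_le⟩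

theorem IsometryParts.isSwapPair_cycSub (D : IsometryParts f a N) (h2 : (2 : K) ≠ 0) (v : V) :
    IsSwapPair f a N (cycSub a (N v)) (cycSub a v) where
  le_orthogonal := cycSub_le_orthogonal_cycSub D.isSelfAdjoint fun r =>
    D.form_aeval_apply_self h2 r v
  invt_left := invt_cycSub a (N v)
  invt_right := invt_cycSub a v
  le_comap_left x hx := by
    obtain ⟨r, rfl⟩ := mem_cycSub.1 hx
    rw [Submodule.mem_comap, D.apply_aeval, D.apply_apply, ← aeval_mul_apply]
    exact aeval_mem_cycSub a v _
  le_comap_right x hx := by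
    obtain ⟨r, rfl⟩ := mem_cycSub.1 hx
    rw [Submodule.mem_comap, D.apply_aeval]
    exact aeval_mem_cycSub a (N v) r

end SwapPair

section ReversalLabel

variable [Fintype K] [DecidableEq K]

/-- `(e, δ)` is the label of the `-1`-eigenspace of an involution of `W` that commutes with `a` and
anticommutes with `N`, the involution being given by its pair of eigenspaces. -/
def ReversalLabel (f : LinearMap.BilinForm K V) (a N : Module.End K V) (W : Submodule K V)
    (e : ZMod 2) (δ : ℤ) : Prop :=
  ∃ P M, IsSwapPair f a N P M ∧ P ⊔ M = W ∧ HasLabel f M e δ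

/-- The reversal labels guaranteed to exist on an invariant nondegenerate subspace `W`, according
to the dimension of `W`; the last alternative is the one produced by summands of odd dimension. -/
def LabelTrichotomy (f : LinearMap.BilinForm K V) (a N : Module.End K V) (W : Submodule K V) :
    Prop :=
  (finrank K W % 4 = 0 ∧ ReversalLabel f a N W 0 1) ∨
  (finrank K W % 4 = 2 ∧ ∀ δ : ℤ, δ = 1 ∨ δ = -1 → ReversalLabel f a N W 1 δ) ∨
  (ReversalLabel f a N W 0 1 ∧ ∃ δ, ReversalLabel f a N W 1 δ)

variable {f : LinearMap.BilinForm K V} {a N : Module.End K V} {W W' : Submodule K V}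
  {e e' : ZMod 2} {δ δ' : ℤ}

namespace ReversalLabel

theorem eq_one_or_neg_one (h : ReversalLabel f a N W e δ) : δ = 1 ∨ δ = -1 := by
  obtain ⟨P, M, -, -, hM⟩ := h
  exact hM.eq_one_or_neg_one

theorem sup (hs : f.IsSymm) (hW : W' ≤ f.orthogonal W) (h : ReversalLabel f a N W e δ)
    (h' : ReversalLabel f a N W' e' δ') :
    ReversalLabel f a N (W ⊔ W') (e + e') (δ * δ') := by
  obtain ⟨P, M, hPM, rfl, hM⟩ := h
  obtain ⟨P', M', hPM', rfl, hM'⟩ := h'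
  have horth {A B : Submodule K V} (hA : A ≤ P ⊔ M) (hB : B ≤ P' ⊔ M') : B ≤ f.orthogonal A :=
    (hB.trans hW).trans (LinearMap.BilinForm.orthogonal_le hA)
  exact ⟨P ⊔ P', M ⊔ M', hPM.sup hs hPM' (horth le_sup_left le_sup_right)
    (le_orthogonal_symm hs (horth le_sup_right le_sup_left)), sup_sup_sup_comm P P' M M',
    hM.sup hM' (horth le_sup_right le_sup_right)⟩

theorem sup_one_one (hs : f.IsSymm) (hW : W' ≤ f.orthogonal W) (h : ReversalLabel f a N W 1 δ)
    (h' : ReversalLabel f a N W' 1 δ) : ReversalLabel f a N (W ⊔ W') 0 1 := by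
  have hsup := h.sup hs hW h'
  rwa [mul_self_eq_one_iff.2 h.eq_one_or_neg_one, CharTwo.add_self_eq_zero] at hsup

theorem map_subtype {ha : Invt a W} {hN : Invt N W}
    (h : ReversalLabel (f.restrict W) (a.restrict ha) (N.restrict hN) ⊤ e δ) :
    ReversalLabel f a N W e δ := by
  obtain ⟨P, M, hPM, hsup, hM⟩ := h
  exact ⟨_, _, hPM.map_subtype, by rw [← Submodule.map_sup, hsup, Submodule.map_subtype_top],
    hM.map_subtype⟩

end ReversalLabel

namespace LabelTrichotomy

theorem map_subtype {ha : Invt a W} {hN : Invt N W}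
    (h : LabelTrichotomy (f.restrict W) (a.restrict ha) (N.restrict hN) ⊤) :
    LabelTrichotomy f a N W := by
  unfold LabelTrichotomy at h
  rw [finrank_top] at h
  exact h.imp (And.imp_right ReversalLabel.map_subtype) (Or.imp
    (And.imp_right fun h' δ hδ => (h' δ hδ).map_subtype)
    (And.imp ReversalLabel.map_subtype fun ⟨δ, hδ⟩ => ⟨δ, hδ.map_subtype⟩))

theorem sup (hs : f.IsSymm) (hW : W' ≤ f.orthogonal W)
    (hdim : finrank K W + finrank K W' = finrank K ↥(W ⊔ W'))
    (h : LabelTrichotomy f a N W) (h' : LabelTrichotomy f a N W') :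
    LabelTrichotomy f a N (W ⊔ W') := by
  rcases h with ⟨hd, h0⟩ | ⟨hd, h1⟩ | ⟨h0, δ, h1⟩ <;>
    rcases h' with ⟨hd', h0'⟩ | ⟨hd', h1'⟩ | ⟨h0', δ', h1'⟩
  · exact .inl ⟨by omega, by simpa using h0.sup hs hW h0'⟩
  · exact .inr (.inl ⟨by omega, fun δ hδ => by simpa using h0.sup hs hW (h1' δ hδ)⟩)
  · exact .inr (.inr ⟨by simpa using h0.sup hs hW h0', δ', by simpa using h0.sup hs hW h1'⟩)
  · exact .inr (.inl ⟨by omega, fun δ hδ => by simpa using (h1 δ hδ).sup hs hW h0'⟩)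
  · exact .inl ⟨by omega, (h1 1 (.inl rfl)).sup_one_one hs hW (h1' 1 (.inl rfl))⟩
  · exact .inr (.inr ⟨(h1 δ' h1'.eq_one_or_neg_one).sup_one_one hs hW h1', 1,
      by simpa using (h1 1 (.inl rfl)).sup hs hW h0'⟩)
  · exact .inr (.inr ⟨by simpa using h0.sup hs hW h0', δ, by simpa using h1.sup hs hW h0'⟩)
  · exact .inr (.inr ⟨h1.sup_one_one hs hW (h1' δ h1.eq_one_or_neg_one), 1,
      by simpa using h0.sup hs hW (h1' 1 (.inl rfl))⟩)
  · exact .inr (.inr ⟨by simpa using h0.sup hs hW h0', δ, by simpa using h1.sup hs hW h0'⟩)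

theorem of_finrank_odd (h : LabelTrichotomy f a N W) (hW : Odd (finrank K W)) :
    ReversalLabel f a N W 0 1 ∧ ∃ δ, ReversalLabel f a N W 1 δ := by
  obtain ⟨k, hk⟩ := hW
  rcases h with ⟨hd, -⟩ | ⟨hd, -⟩ | h
  · omega
  · omega
  · exact h

end LabelTrichotomy

end ReversalLabel

section Fitting

variable {f : LinearMap.BilinForm K V} {a N : Module.End K V}

theorem restrict_ker_nondegenerate (hs : f.IsSymm) (hn : f.Nondegenerate) {S S' : Module.End K V}
    (hadj : f.IsAdjointPair f S' S) (hker : LinearMap.ker S ≤ LinearMap.ker S')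
    (hsup : LinearMap.ker S ⊔ LinearMap.range S = ⊤) :
    (f.restrict (LinearMap.ker S)).Nondegenerate := by
  rw [restrict_nondegenerate_iff hs]
  intro x hx hxker
  refine hn.1 x fun y => ?_
  obtain ⟨y₀, hy₀, _, ⟨z, rfl⟩, rfl⟩ := Submodule.mem_sup.1 (hsup.ge (Submodule.mem_top (x := y)))
  rw [map_add, hxker y₀ hy₀, ← hadj, LinearMap.mem_ker.1 (hker hx), map_zero,
    LinearMap.zero_apply, add_zero]

theorem exists_apply_self_ne_zero (hs : f.IsSymm) (hn : f.Nondegenerate) (h2 : (2 : K) ≠ 0)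
    {S : Module.End K V} (hS : f.IsSelfAdjoint S) (hS0 : S ≠ 0) : ∃ v, f (S v) v ≠ 0 := by
  let _ := invertibleOfNonzero h2
  refine LinearMap.BilinForm.exists_bilinForm_self_ne_zero (B := f ∘ₗ S) (fun h => hS0 ?_)
    ⟨fun x y => (hS x y).trans (hs.eq x (S y))⟩
  exact LinearMap.ext fun v => hn.1 _ fun w => LinearMap.congr_fun₂ h v w

/-- There is no orthogonal decomposition of the space into proper subspaces invariant under both
`a` and `N`; for the parts of an isometry this is orthogonal indecomposability. -/
def IsJointlyIndec (f : LinearMap.BilinForm K V) (a N : Module.End K V) : Prop :=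
  ∀ W : Submodule K V, Invt a W → Invt N W → (f.restrict W).Nondegenerate → W = ⊥ ∨ W = ⊤

theorem exists_monic_irreducible_ker_aeval_ne_bot [FiniteDimensional K V] [Nontrivial V]
    (a : Module.End K V) :
    ∃ π : K[X], π.Monic ∧ Irreducible π ∧ LinearMap.ker (aeval a π) ≠ ⊥ := by
  obtain ⟨π, hm, hπ, q, hq⟩ := Polynomial.exists_monic_irreducible_factor (minpoly K a)
    (minpoly.not_isUnit K a)
  refine ⟨π, hm, hπ, fun hker => hπ.not_isUnit ?_⟩
  have hq0 : q ≠ 0 := right_ne_zero_of_mul (hq ▸ minpoly.ne_zero_of_finite K a)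
  have haq : aeval a q = 0 := LinearMap.ext fun x => LinearMap.ker_eq_bot'.1 hker _ <| by
    rw [← aeval_mul_apply, ← hq, minpoly.aeval, LinearMap.zero_apply]
  have hdvd : π * q ∣ 1 * q := by rw [one_mul, ← hq]; exact minpoly.dvd K a haq
  exact isUnit_of_dvd_one ((mul_dvd_mul_iff_right hq0).1 hdvd)

theorem IsometryParts.exists_ker_aeval_pow_eq_top [FiniteDimensional K V]
    (D : IsometryParts f a N) (hn : f.Nondegenerate) (hI : IsJointlyIndec f a N) {π : K[X]}
    (hker : LinearMap.ker (aeval a π) ≠ ⊥) : ∃ k, LinearMap.ker (aeval a (π ^ k)) = ⊤ := by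
  obtain ⟨k, hk1, hk⟩ := ((Filter.eventually_ge_atTop 1).and
    (LinearMap.eventually_isCompl_ker_pow_range_pow (aeval a π))).exists
  rw [← map_pow] at hk
  refine ⟨k, (hI _ (fun x hx => ?_) (fun x hx => ?_) ?_).resolve_left fun hbot => hker ?_⟩
  · rw [LinearMap.mem_ker] at hx ⊢
    simpa [mul_comm] using aeval_mul_apply_eq_zero hx X
  · rw [LinearMap.mem_ker] at hx ⊢
    rw [← D.apply_aeval, hx, map_zero]
  · exact restrict_ker_nondegenerate D.isSymm hn (apply_aeval_left D.isSelfAdjoint _) le_rfl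
      hk.sup_eq_top
  · rw [eq_bot_iff, ← hbot]
    intro x hx
    rw [LinearMap.mem_ker] at hx ⊢
    simpa only [← pow_succ', Nat.sub_add_cancel hk1] using
      aeval_mul_apply_eq_zero hx (π ^ (k - 1))

theorem IsometryParts.exists_primary [FiniteDimensional K V] [Nontrivial V]
    (D : IsometryParts f a N) (hn : f.Nondegenerate) (hI : IsJointlyIndec f a N) :
    ∃ π : K[X], π.Monic ∧ Irreducible π ∧
      ∃ n : ℕ, aeval a (π ^ (n + 1)) = 0 ∧ aeval a (π ^ n) ≠ 0 := by
  obtain ⟨π, hm, hπ, hker⟩ := exists_monic_irreducible_ker_aeval_ne_bot a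
  obtain ⟨k, hk⟩ := D.exists_ker_aeval_pow_eq_top hn hI hker
  obtain ⟨n, hn0, hn1⟩ := Nat.exists_not_and_succ_of_not_zero_of_exists
    (p := fun k => aeval a (π ^ k) = 0) (by simp) ⟨k, LinearMap.ker_eq_top.1 hk⟩
  exact ⟨π, hm, hπ, n, hn1, hn0⟩

end Fitting

section CyclicSplitting

variable {f : LinearMap.BilinForm K V} {a N : Module.End K V} {v : V} {p p' : K[X]}

theorem IsSwapPair.sup_eq_top (hs : f.IsSymm) (hI : IsJointlyIndec f a N) {P M : Submodule K V}
    (h : IsSwapPair f a N P M) (hP : (f.restrict P).Nondegenerate)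
    (hM : (f.restrict M).Nondegenerate) (hne : P ⊔ M ≠ ⊥) : P ⊔ M = ⊤ := by
  refine (hI (P ⊔ M) (sup_le_comap_sup h.invt_left h.invt_right) ?_
    (restrict_sup_nondegenerate hs hP hM h.le_orthogonal)).resolve_left hne
  exact (sup_le_comap_sup h.le_comap_left h.le_comap_right).trans_eq (by rw [sup_comm])

/-- The form on `N v` is the form on `v` twisted by `-(X ^ 2 - 4)`. -/
theorem IsExactPair.skew (D : IsometryParts f a N) (h : IsExactPair f a p v v)
    (hzero : aeval a p' (N v) = 0) (hdvd : ∀ r, p ∣ r * (X ^ 2 - C 4) → p' ∣ r) :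
    IsExactPair f a p' (N v) (N v) := by
  refine ⟨hzero, hzero, fun r hr => hdvd r (h.dvd _ fun s => neg_eq_zero.1 ?_)⟩
  rw [mul_right_comm, ← D.form_aeval_apply_apply, hr]

theorem IsometryParts.cycSub_sup_cycSub_eq_top (D : IsometryParts f a N) (h2 : (2 : K) ≠ 0)
    (hI : IsJointlyIndec f a N) (hv : v ≠ 0) (h : IsExactPair f a p v v)
    (h' : IsExactPair f a p' (N v) (N v)) : cycSub a (N v) ⊔ cycSub a v = ⊤ :=
  (D.isSwapPair_cycSub h2 v).sup_eq_top D.isSymm hI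
    (h'.restrict_cycSub_nondegenerate D.isSymm D.isSelfAdjoint)
    (h.restrict_cycSub_nondegenerate D.isSymm D.isSelfAdjoint)
    fun hbot => hv <| (Submodule.mem_bot K).1 <| hbot.le <|
      Submodule.mem_sup_right (self_mem_cycSub a v)

theorem IsometryParts.finrank_eq_natDegree_add_natDegree [FiniteDimensional K V]
    (D : IsometryParts f a N) (h2 : (2 : K) ≠ 0) (hI : IsJointlyIndec f a N) (hv : v ≠ 0)
    (h : IsExactPair f a p v v) (h' : IsExactPair f a p' (N v) (N v)) :
    finrank K V = p'.natDegree + p.natDegree := by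
  rw [← finrank_top, ← D.cycSub_sup_cycSub_eq_top h2 hI hv h h', ← h.finrank_cycSub,
    ← h'.finrank_cycSub, finrank_add_finrank_of_le_orthogonal D.isSymm
      (h'.restrict_cycSub_nondegenerate D.isSymm D.isSelfAdjoint)
      (D.isSwapPair_cycSub h2 v).le_orthogonal]

theorem exists_isExactPair_self (hs : f.IsSymm) (hn : f.Nondegenerate) (h2 : (2 : K) ≠ 0)
    (ha : f.IsSelfAdjoint a) {π : K[X]} (hπ : Irreducible π) {n : ℕ}
    (hzero : aeval a (π ^ (n + 1)) = 0) (hne : aeval a (π ^ n) ≠ 0) :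
    ∃ v ≠ 0, IsExactPair f a (π ^ (n + 1)) v v := by
  obtain ⟨v, hv⟩ := exists_apply_self_ne_zero hs hn h2 (apply_aeval_left ha _) hne
  have hv0 : aeval a (π ^ (n + 1)) v = 0 := LinearMap.congr_fun hzero v
  refine ⟨v, ?_, isExactPair_of_ne_zero hπ (h := 1) hv0 hv0 (by rwa [mul_one])⟩
  rintro rfl
  simp at hv

end CyclicSplitting

section FiniteField

theorem ringChar_ne_two {F : Type*} [Field F] (h2 : (2 : F) ≠ 0) : ringChar F ≠ 2 := fun h =>
  h2 (by exact_mod_cast h ▸ CharP.cast_eq_zero F (ringChar F))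

theorem exists_sq_sub_mul_sq_eq {F : Type*} [Field F] [Finite F] (h2 : (2 : F) ≠ 0) {m : F}
    (hm : m ≠ 0) (c : F) : ∃ x y : F, x ^ 2 - m * y ^ 2 = c := by
  have := Fintype.ofFinite F
  obtain ⟨x, y, hxy⟩ := FiniteField.exists_root_sum_quadratic (f := X ^ 2 - C c)
    (g := C (-m) * X ^ 2) (by compute_degree!) (degree_C_mul_X_pow 2 (neg_ne_zero.2 hm))
    (FiniteField.odd_card_of_char_ne_two (ringChar_ne_two h2))
  simp only [eval_sub, eval_mul, eval_pow, eval_X, eval_C] at hxy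
  exact ⟨x, y, by linear_combination hxy⟩

variable [Fintype K] [DecidableEq K]

theorem exists_quadraticChar_eq (h2 : (2 : K) ≠ 0) {δ : ℤ} (hδ : δ = 1 ∨ δ = -1) :
    ∃ k : K, k ≠ 0 ∧ quadraticChar K k = δ := by
  rcases hδ with rfl | rfl
  · exact ⟨1, one_ne_zero, map_one _⟩
  · obtain ⟨k, hk⟩ := quadraticChar_exists_neg_one' (ringChar_ne_two h2)
    exact ⟨k, k.ne_zero, hk⟩

end FiniteField

section Generic

variable {f : LinearMap.BilinForm K V} {a N : Module.End K V} {v : V} {π : K[X]} {n : ℕ}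

theorem IsometryParts.form_aeval_add_apply (D : IsometryParts f a N) (h2 : (2 : K) ≠ 0)
    (r α β : K[X]) (v : V) :
    f (aeval a r (aeval a α v + aeval a β (N v))) (aeval a α v + aeval a β (N v)) =
      f (aeval a (r * (α ^ 2 - (X ^ 2 - C 4) * β ^ 2)) v) v := by
  have hsplit : r * (α ^ 2 - (X ^ 2 - C 4) * β ^ 2) =
      r * α * α - r * β * β * (X ^ 2 - C 4) := by ring
  simp only [map_add, LinearMap.add_apply, ← aeval_mul_apply]
  rw [apply_aeval_aeval D.isSelfAdjoint, apply_aeval_aeval D.isSelfAdjoint,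
    apply_aeval_aeval D.isSelfAdjoint, apply_aeval_aeval D.isSelfAdjoint,
    D.form_aeval_apply_self h2, D.form_aeval_apply, D.form_aeval_apply_self h2,
    D.form_aeval_apply_apply, hsplit, map_sub, LinearMap.sub_apply, map_sub, LinearMap.sub_apply]
  ring

/-- Multiplying the residue form by `c` amounts to moving `v` to a vector `α(a) v + β(a) N v` with
`α ^ 2 - (X ^ 2 - 4) β ^ 2 = c`, a norm equation that is solvable over a finite field. -/
theorem IsometryParts.exists_residueForm_comp_mulLeft [Finite K] [Fact (Irreducible π)]
    (D : IsometryParts f a N) (h2 : (2 : K) ≠ 0) (hm : π.Monic) (hdvd : ¬π ∣ X ^ 2 - C 4)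
    {q : K[X]} {μ : AdjoinRoot π →ₗ[K] K}
    (hμ : ∀ g, μ (AdjoinRoot.mk π g) = f (aeval a (q * q * g) v) v) (c : AdjoinRoot π) :
    ∃ v' : V, ∀ g, (μ ∘ₗ LinearMap.mulLeft K c) (AdjoinRoot.mk π g) =
      f (aeval a (q * q * g) v') v' := by
  have : FiniteDimensional K (AdjoinRoot π) := (AdjoinRoot.powerBasis' hm).finite
  have : Finite (AdjoinRoot π) := Module.finite_of_finite K
  have h2' : (2 : AdjoinRoot π) ≠ 0 := by
    rw [← map_ofNat (algebraMap K (AdjoinRoot π)) 2]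
    exact (_root_.map_ne_zero _).2 h2
  obtain ⟨x, y, hxy⟩ := exists_sq_sub_mul_sq_eq h2' (mt AdjoinRoot.mk_eq_zero.1 hdvd) c
  obtain ⟨α, rfl⟩ := AdjoinRoot.mk_surjective x
  obtain ⟨β, rfl⟩ := AdjoinRoot.mk_surjective y
  refine ⟨aeval a α v + aeval a β (N v), fun g => ?_⟩
  have hmk : AdjoinRoot.mk π (g * (α ^ 2 - (X ^ 2 - C 4) * β ^ 2)) = c * AdjoinRoot.mk π g := by
    rw [← hxy, mul_comm, map_mul, map_sub, map_mul (AdjoinRoot.mk π), map_pow, map_pow]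
  rw [D.form_aeval_add_apply h2, mul_assoc, ← hμ, hmk, LinearMap.comp_apply,
    LinearMap.mulLeft_apply]

theorem isExactPair_of_residueForm_ne_zero (hπ : Irreducible π)
    (hv : aeval a (π ^ n * (π ^ n * π)) v = 0) {μ : AdjoinRoot π →ₗ[K] K} (hμ0 : μ ≠ 0)
    (hμ : ∀ g, μ (AdjoinRoot.mk π g) = f (aeval a (π ^ n * π ^ n * g) v) v) :
    IsExactPair f a (π ^ n * (π ^ n * π)) v v := by
  have hpow : π ^ n * (π ^ n * π) = π ^ (n + n + 1) := by ring
  obtain ⟨x, hx⟩ : ∃ x, μ x ≠ 0 := by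
    by_contra! h
    exact hμ0 (LinearMap.ext h)
  obtain ⟨g, rfl⟩ := AdjoinRoot.mk_surjective x
  rw [hpow] at hv ⊢
  exact isExactPair_of_ne_zero hπ (h := g) hv hv (by rwa [pow_add, ← hμ])

theorem IsExactPair.ne_zero {p : K[X]} {w : V} (h : IsExactPair f a p v w) (hp : ¬IsUnit p) :
    v ≠ 0 := by
  rintro rfl
  exact hp (isUnit_of_dvd_one (h.dvd 1 fun s => by rw [map_zero, map_zero, LinearMap.zero_apply]))

theorem IsExactPair.skew_of_not_dvd (D : IsometryParts f a N) (hπ : Irreducible π)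
    (hdvd : ¬π ∣ X ^ 2 - C 4) (h : IsExactPair f a (π ^ n) v v) :
    IsExactPair f a (π ^ n) (N v) (N v) :=
  h.skew D (by rw [← D.apply_aeval, h.left, map_zero])
    fun _ => (hπ.coprime_iff_not_dvd.2 hdvd).pow_left.dvd_of_dvd_mul_right

variable [Fintype K] [DecidableEq K]

theorem IsometryParts.reversalLabel_top {p p' : K[X]} (D : IsometryParts f a N) (h2 : (2 : K) ≠ 0)
    (hI : IsJointlyIndec f a N) (hv : v ≠ 0) (h : IsExactPair f a p v v)
    (h' : IsExactPair f a p' (N v) (N v)) {e : ZMod 2} {δ : ℤ} (hl : HasLabel f (cycSub a v) e δ) :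
    ReversalLabel f a N ⊤ e δ :=
  ⟨_, _, D.isSwapPair_cycSub h2 v, D.cycSub_sup_cycSub_eq_top h2 hI hv h h', hl⟩

variable [FiniteDimensional K V]

theorem IsometryParts.exists_hasLabel_cycSub (D : IsometryParts f a N) (h2 : (2 : K) ≠ 0)
    (hsq : IsSquare (-1 : K)) (hπ : Irreducible π) (hm : π.Monic) (hdvd : ¬π ∣ X ^ 2 - C 4)
    (hzero : aeval a (π ^ n * (π ^ n * π)) = 0) (h : IsExactPair f a (π ^ n * (π ^ n * π)) v v)
    {δ : ℤ} (hδ : δ = 1 ∨ δ = -1) :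
    ∃ v' : V, IsExactPair f a (π ^ n * (π ^ n * π)) v' v' ∧
      HasLabel f (cycSub a v') π.natDegree δ := by
  have : Fact (Irreducible π) := ⟨hπ⟩
  have hqne : π ^ n ≠ 0 := pow_ne_zero n hπ.ne_zero
  have : FiniteDimensional K (AdjoinRoot π) := (AdjoinRoot.powerBasis' hm).finite
  have : Finite (AdjoinRoot π) := Module.finite_of_finite K
  obtain ⟨μ, hμ⟩ := exists_residueForm (f := f) hm h.left
  have hμ0 := h.residueForm_ne_zero hπ hqne hμ
  set d := (LinearMap.BilinForm.toMatrix (AdjoinRoot.powerBasis' hm).basis (mulForm μ)).det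
  have hd : d ≠ 0 :=
    (LinearMap.BilinForm.nondegenerate_iff_det_ne_zero _).1 (mulForm_nondegenerate hμ0)
  obtain ⟨k, hk0, hk⟩ := exists_quadraticChar_eq h2 hδ
  obtain ⟨c, hc⟩ := FiniteField.norm_surjective K (AdjoinRoot π) (k * d⁻¹)
  obtain ⟨v', hμ'⟩ := D.exists_residueForm_comp_mulLeft h2 hm hdvd hμ c
  have hdet : (LinearMap.BilinForm.toMatrix (AdjoinRoot.powerBasis' hm).basis
      (mulForm (μ ∘ₗ LinearMap.mulLeft K c))).det = k := by
    rw [det_toMatrix_mulForm_comp_mulLeft, hc, inv_mul_cancel_right₀ hd]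
  have hc0 : c ≠ 0 := by
    rintro rfl
    exact mul_ne_zero hk0 (inv_ne_zero hd) (by rw [← hc, Algebra.norm_zero])
  have hμ'0 : μ ∘ₗ LinearMap.mulLeft K c ≠ 0 := fun h0 => hμ0 <| LinearMap.ext fun x => by
    simpa [mul_inv_cancel_left₀ hc0] using LinearMap.congr_fun h0 (c⁻¹ * x)
  have h' := isExactPair_of_residueForm_ne_zero hπ (LinearMap.congr_fun hzero v') hμ'0 hμ'
  refine ⟨v', h', ?_⟩
  rw [← hk, ← hdet]
  exact h'.hasLabel_cycSub_of_mul_mul D.isSymm D.isSelfAdjoint h2 hsq hm hqne hμ'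

theorem IsometryParts.labelTrichotomy_top_of_not_dvd (D : IsometryParts f a N)
    (hn : f.Nondegenerate) (h2 : (2 : K) ≠ 0) (hsq : IsSquare (-1 : K))
    (hI : IsJointlyIndec f a N) (hπ : Irreducible π) (hm : π.Monic) (hdvd : ¬π ∣ X ^ 2 - C 4)
    (hzero : aeval a (π ^ (n + 1)) = 0) (hne : aeval a (π ^ n) ≠ 0) :
    LabelTrichotomy f a N ⊤ := by
  obtain ⟨v, hv, h⟩ := exists_isExactPair_self D.isSymm hn h2 D.isSelfAdjoint hπ hzero hne
  have h' := h.skew_of_not_dvd D hπ hdvd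
  have hdim : finrank K (⊤ : Submodule K V) = 2 * ((n + 1) * π.natDegree) := by
    rw [finrank_top, D.finrank_eq_natDegree_add_natDegree h2 hI hv h h', natDegree_pow, two_mul]
  rcases Nat.even_or_odd' (n + 1) with ⟨s, hs | hs⟩
  · rw [hs, two_mul, pow_add] at h h'
    refine .inl ⟨?_, D.reversalLabel_top h2 hI hv h h' <|
      h.hasLabel_cycSub_of_mul_self D.isSymm D.isSelfAdjoint h2 hsq (pow_ne_zero s hπ.ne_zero)⟩
    rw [hdim, hs, ← mul_assoc, ← mul_assoc, Nat.mul_assoc]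
    exact Nat.mul_mod_right 4 _
  · have hpow : π ^ (n + 1) = π ^ s * (π ^ s * π) := by rw [hs]; ring
    have hlabel {δ : ℤ} (hδ : δ = 1 ∨ δ = -1) : ReversalLabel f a N ⊤ π.natDegree δ := by
      rw [hpow] at h hzero
      obtain ⟨w, hw, hwl⟩ := D.exists_hasLabel_cycSub h2 hsq hπ hm hdvd hzero h hδ
      rw [← hpow] at hw
      exact D.reversalLabel_top h2 hI (hw.ne_zero (mt (isUnit_pow_succ_iff).1 hπ.not_isUnit)) hw
        (hw.skew_of_not_dvd D hπ hdvd) hwl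
    rw [hs] at hdim
    rcases Nat.even_or_odd' π.natDegree with ⟨k, hk | hk⟩
    · refine .inl ⟨by rw [hdim, hk]; ring_nf; omega, ?_⟩
      simpa [hk, CharTwo.two_eq_zero] using hlabel (.inl rfl)
    · refine .inr (.inl ⟨by rw [hdim, hk]; ring_nf; omega, fun δ hδ => ?_⟩)
      simpa [hk, CharTwo.two_eq_zero] using hlabel hδ

end Generic

section Special

variable {f : LinearMap.BilinForm K V} {a N : Module.End K V} {v w : V} {κ : K} {n : ℕ}

theorem X_sq_sub_C_four_eq (hκ : κ ^ 2 = 4) :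
    (X ^ 2 - C 4 : K[X]) = (X - C κ) * (X + C κ) := by
  rw [← hκ, C_pow]
  ring

theorem isCoprime_X_sub_C_X_add_C (h2 : (2 : K) ≠ 0) (hκ : κ ≠ 0) :
    IsCoprime (X - C κ) (X + C κ) := by
  rw [(irreducible_X_sub_C κ).coprime_iff_not_dvd, dvd_iff_isRoot, IsRoot.def, eval_add, eval_X,
    eval_C, ← two_mul]
  exact mul_ne_zero h2 hκ

theorem exists_sq_eq_four_of_dvd {π : K[X]} (hπ : Irreducible π) (hm : π.Monic)
    (hdvd : π ∣ X ^ 2 - C 4) : ∃ κ : K, κ ^ 2 = 4 ∧ π = X - C κ := by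
  have hfac : (X ^ 2 - C 4 : K[X]) = (X - C 2) * (X - C (-2)) := by
    rw [X_sq_sub_C_four_eq (κ := 2) (by norm_num), C_neg, sub_neg_eq_add]
  rw [hfac] at hdvd
  have heq {κ : K} (h : π ∣ X - C κ) : π = X - C κ :=
    eq_of_monic_of_associated hm (monic_X_sub_C κ) (hπ.associated_of_dvd (irreducible_X_sub_C κ) h)
  rcases hπ.prime.dvd_or_dvd hdvd with h | h
  · exact ⟨2, by norm_num, heq h⟩
  · exact ⟨-2, by norm_num, heq h⟩

theorem ne_zero_of_sq_eq_four (h2 : (2 : K) ≠ 0) (hκ : κ ^ 2 = 4) : κ ≠ 0 := by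
  rintro rfl
  exact mul_ne_zero h2 h2 (by linear_combination -hκ)

theorem IsExactPair.skew_of_sq_eq_four (D : IsometryParts f a N) (h2 : (2 : K) ≠ 0)
    (hκ : κ ^ 2 = 4) (h : IsExactPair f a ((X - C κ) ^ (n + 1)) v v)
    (hzero : aeval a ((X - C κ) ^ n) (N v) = 0) :
    IsExactPair f a ((X - C κ) ^ n) (N v) (N v) := by
  refine h.skew D hzero fun r hr => ?_
  rw [X_sq_sub_C_four_eq hκ, mul_left_comm, pow_succ', mul_dvd_mul_iff_left (X_sub_C_ne_zero κ)]
    at hr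
  exact (isCoprime_X_sub_C_X_add_C h2 (ne_zero_of_sq_eq_four h2 hκ)).pow_left.dvd_of_dvd_mul_right
    hr

theorem IsometryParts.apply_aeval_pow_notMem_cycSub (D : IsometryParts f a N)
    (hn : f.Nondegenerate) {π : K[X]} (hπ : Irreducible π) (hdvd : π ∣ X ^ 2 - C 4)
    (hzero : aeval a (π ^ (n + 1)) = 0) (hv : aeval a (π ^ n) (N v) ≠ 0) :
    aeval a (π ^ n) (N v) ∉ cycSub a v := by
  intro hmem
  obtain ⟨r, hr⟩ := mem_cycSub.1 hmem
  obtain ⟨y, hy⟩ : ∃ y, f (aeval a (π ^ n) (N v)) y ≠ 0 := by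
    by_contra! h
    exact hv (hn.1 _ h)
  have hpair : IsExactPair f a (π ^ (n + 1)) (N v) y :=
    isExactPair_of_ne_zero hπ (h := 1) (LinearMap.congr_fun hzero _) (LinearMap.congr_fun hzero _)
      (by rwa [mul_one])
  have hrN : aeval a r (N v) = 0 := by
    obtain ⟨ρ, hρ⟩ := hdvd
    rw [← D.apply_aeval, hr, D.apply_aeval, D.apply_apply, ← aeval_mul_apply, hρ, ← mul_assoc,
      ← pow_succ]
    exact aeval_mul_apply_eq_zero (LinearMap.congr_fun hzero v) ρ
  obtain ⟨s, rfl⟩ := (hpair.aeval_eq_zero_iff r).1 hrN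
  exact hv (hr ▸ aeval_mul_apply_eq_zero (LinearMap.congr_fun hzero v) s)

theorem exists_mem_orthogonal_apply_ne_zero [FiniteDimensional K V] (hs : f.IsSymm)
    (hn : f.Nondegenerate) {W : Submodule K V} {z : V} (hz : z ∉ W) :
    ∃ w ∈ f.orthogonal W, f z w ≠ 0 := by
  by_contra! h
  rw [← LinearMap.BilinForm.orthogonal_orthogonal hn hs.isRefl W] at hz
  exact hz fun w hw => (hs.eq w z).trans (h w hw)

theorem apply_aeval_pow_mul_eq_eval_mul {m : ℕ}
    (h : ∀ s, f (aeval a ((X - C κ) ^ (m + 1) * s) v) w = 0) (r : K[X]) :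
    f (aeval a ((X - C κ) ^ m * r) v) w = r.eval κ * f (aeval a ((X - C κ) ^ m) v) w := by
  obtain ⟨s, hs⟩ := X_sub_C_dvd_sub_C_eval (a := κ) (p := r)
  have hsplit : (X - C κ) ^ m * r =
      C (r.eval κ) * (X - C κ) ^ m + (X - C κ) ^ (m + 1) * s := by
    linear_combination (X - C κ) ^ m * hs
  rw [hsplit, map_add, LinearMap.add_apply, map_add, LinearMap.add_apply, h, add_zero,
    aeval_mul_apply, aeval_C, Module.algebraMap_end_apply, map_smul, LinearMap.smul_apply,
    smul_eq_mul]

theorem IsometryParts.form_aeval_add_aeval_apply (D : IsometryParts f a N) (q β : K[X]) (v w : V) :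
    f (aeval a q (w + aeval a β (N v))) (w + aeval a β (N v)) = f (aeval a q w) w +
      2 * f (aeval a (q * β) (N v)) w - f (aeval a (q * β * β * (X ^ 2 - C 4)) v) v := by
  have hcross : f (aeval a q w) (aeval a β (N v)) = f (aeval a (q * β) (N v)) w := by
    rw [apply_aeval_aeval D.isSelfAdjoint, apply_aeval_left D.isSelfAdjoint, D.isSymm.eq]
  simp only [map_add, LinearMap.add_apply, ← aeval_mul_apply]
  rw [hcross, apply_aeval_aeval D.isSelfAdjoint, D.form_aeval_apply_apply]
  ring

/-- One step of Newton iteration: `w` is corrected by a multiple of `(a - κ) ^ (n - m) (N v)`. -/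
theorem IsometryParts.exists_isotropic_succ (D : IsometryParts f a N) (h2 : (2 : K) ≠ 0)
    (hκ : κ ^ 2 = 4) (hzero : aeval a ((X - C κ) ^ (n + 1)) = 0)
    (hvw : ∀ r : K[X], f (aeval a r v) w = 0) (hB : f (aeval a ((X - C κ) ^ n) (N v)) w ≠ 0) {m : ℕ}
    (hm : m ≤ n) (hw : ∀ r, f (aeval a ((X - C κ) ^ (m + 1) * r) w) w = 0) :
    ∃ w', (∀ r : K[X], f (aeval a r v) w' = 0) ∧ f (aeval a ((X - C κ) ^ n) (N v)) w' ≠ 0 ∧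
      ∀ r, f (aeval a ((X - C κ) ^ m * r) w') w' = 0 := by
  obtain ⟨j, rfl⟩ := Nat.exists_eq_add_of_le hm
  have hfac := X_sq_sub_C_four_eq hκ
  set π := X - C κ
  have hkill (r : K[X]) (x y : V) : f (aeval a (π ^ (m + j + 1) * r) x) y = 0 := by
    rw [aeval_mul_apply_eq_zero (LinearMap.congr_fun hzero x), map_zero, LinearMap.zero_apply]
  set B := f (aeval a (π ^ (m + j)) (N v)) w
  set c := -f (aeval a (π ^ m) w) w / (2 * B)
  have hcB : f (aeval a (π ^ m) w) w + 2 * (c * B) = 0 := by simp only [c]; field_simp; ring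
  refine ⟨w + aeval a (C c * π ^ j) (N v), fun r => ?_, ?_, fun r => ?_⟩
  · rw [map_add, hvw, apply_aeval_aeval D.isSelfAdjoint, D.form_aeval_apply,
      D.form_aeval_apply_self h2, neg_zero, add_zero]
  · rwa [map_add, apply_aeval_aeval D.isSelfAdjoint, D.form_aeval_apply_apply, hfac,
      show π ^ (m + j) * (C c * π ^ j) * (π * (X + C κ)) =
        π ^ (m + j + 1) * (C c * π ^ j * (X + C κ)) by ring, hkill, neg_zero, add_zero]
  · have hlin : f (aeval a (π ^ m * r * (C c * π ^ j)) (N v)) w = r.eval κ * (c * B) := by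
      rw [show π ^ m * r * (C c * π ^ j) = π ^ (m + j) * (r * C c) by ring,
        apply_aeval_pow_mul_eq_eval_mul (hkill · (N v) w), eval_mul, eval_C, mul_assoc]
    have hquad : π ^ m * r * (C c * π ^ j) * (C c * π ^ j) * (X ^ 2 - C 4) =
        π ^ (m + j + 1) * (r * C c * (C c * π ^ j) * (X + C κ)) := by rw [hfac]; ring
    rw [D.form_aeval_add_aeval_apply, hlin, hquad, hkill, apply_aeval_pow_mul_eq_eval_mul hw]
    linear_combination r.eval κ * hcB

theorem IsometryParts.exists_isotropic [FiniteDimensional K V] (D : IsometryParts f a N)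
    (hn : f.Nondegenerate) (h2 : (2 : K) ≠ 0) (hκ : κ ^ 2 = 4)
    (hzero : aeval a ((X - C κ) ^ (n + 1)) = 0) (hv : aeval a ((X - C κ) ^ n) (N v) ≠ 0) {m : ℕ}
    (hm : m ≤ n + 1) :
    ∃ w, (∀ r : K[X], f (aeval a r v) w = 0) ∧ f (aeval a ((X - C κ) ^ n) (N v)) w ≠ 0 ∧
      ∀ r, f (aeval a ((X - C κ) ^ m * r) w) w = 0 := by
  induction hm using Nat.decreasingInduction with
  | of_succ m hm ih =>
    obtain ⟨w, hvw, hB, hw⟩ := ih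
    exact D.exists_isotropic_succ h2 hκ hzero hvw hB (Nat.lt_succ_iff.1 hm) hw
  | self =>
    obtain ⟨w, hvw, hB⟩ := exists_mem_orthogonal_apply_ne_zero D.isSymm hn
      (D.apply_aeval_pow_notMem_cycSub hn (irreducible_X_sub_C κ)
        (Dvd.intro _ (X_sq_sub_C_four_eq hκ).symm) hzero hv)
    refine ⟨w, fun r => hvw _ (aeval_mem_cycSub a v r), hB, fun r => ?_⟩
    rw [aeval_mul_apply_eq_zero (LinearMap.congr_fun hzero w), map_zero, LinearMap.zero_apply]

variable [Fintype K] [DecidableEq K] [FiniteDimensional K V]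

theorem IsometryParts.labelTrichotomy_top_of_forall_eq_zero (D : IsometryParts f a N)
    (hn : f.Nondegenerate) (h2 : (2 : K) ≠ 0) (hsq : IsSquare (-1 : K))
    (hI : IsJointlyIndec f a N) (hκ : κ ^ 2 = 4) (hzero : aeval a ((X - C κ) ^ (n + 1)) = 0)
    (hne : aeval a ((X - C κ) ^ n) ≠ 0) (hN : ∀ x, aeval a ((X - C κ) ^ n) (N x) = 0) :
    LabelTrichotomy f a N ⊤ := by
  have hs := D.isSymm
  have ha := D.isSelfAdjoint
  obtain ⟨v, hv, h⟩ := exists_isExactPair_self hs hn h2 ha (irreducible_X_sub_C κ) hzero hne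
  have h' := h.skew_of_sq_eq_four D h2 hκ (hN v)
  have hswap := (D.isSwapPair_cycSub h2 v).symm hs
  have htop := D.cycSub_sup_cycSub_eq_top h2 hI hv h h'
  obtain ⟨δ, hδ⟩ := exists_hasLabel hs h2 (h.restrict_cycSub_nondegenerate hs ha)
  obtain ⟨δ', hδ'⟩ := exists_hasLabel hs h2 (h'.restrict_cycSub_nondegenerate hs ha)
  rw [h.finrank_cycSub, natDegree_pow, natDegree_X_sub_C, mul_one] at hδ
  rw [h'.finrank_cycSub, natDegree_pow, natDegree_X_sub_C, mul_one] at hδ'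
  refine .inr (.inr ?_)
  rcases Nat.even_or_odd n with heven | hodd
  · obtain ⟨s, rfl⟩ := heven
    rw [pow_add] at h'
    have hl := h'.hasLabel_cycSub_of_mul_self hs ha h2 hsq (pow_ne_zero s (X_sub_C_ne_zero κ))
    refine ⟨⟨_, _, hswap, (sup_comm _ _).trans htop, hl⟩, δ, _, _, hswap.symm hs, htop, ?_⟩
    simpa [CharTwo.add_self_eq_zero] using hδ
  · obtain ⟨s, hs'⟩ := hodd.add_one
    rw [hs', pow_add] at h
    have hl := h.hasLabel_cycSub_of_mul_self hs ha h2 hsq (pow_ne_zero s (X_sub_C_ne_zero κ))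
    refine ⟨⟨_, _, hswap.symm hs, htop, hl⟩, δ', _, _, hswap, (sup_comm _ _).trans htop, ?_⟩
    rwa [(ZMod.natCast_eq_one_iff_odd).2 hodd] at hδ'

theorem IsometryParts.labelTrichotomy_top_of_ne_zero (D : IsometryParts f a N)
    (hn : f.Nondegenerate) (h2 : (2 : K) ≠ 0) (hsq : IsSquare (-1 : K))
    (hI : IsJointlyIndec f a N) (hκ : κ ^ 2 = 4) (hzero : aeval a ((X - C κ) ^ (n + 1)) = 0)
    (hv : aeval a ((X - C κ) ^ n) (N v) ≠ 0) : LabelTrichotomy f a N ⊤ := by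
  have hs := D.isSymm
  have ha := D.isSelfAdjoint
  obtain ⟨w, hvw, hB, hww⟩ := D.exists_isotropic hn h2 hκ hzero hv (Nat.zero_le _)
  simp only [pow_zero, one_mul] at hww
  have hpair : IsExactPair f a ((X - C κ) ^ (n + 1)) (N v) w :=
    isExactPair_of_ne_zero (irreducible_X_sub_C κ) (h := 1) (LinearMap.congr_fun hzero _)
      (LinearMap.congr_fun hzero _) (by rwa [mul_one])
  have hpair' : IsExactPair f a ((X - C κ) ^ (n + 1)) v (N w) :=
    isExactPair_of_ne_zero (irreducible_X_sub_C κ) (h := 1) (LinearMap.congr_fun hzero _)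
      (LinearMap.congr_fun hzero _) (by rwa [mul_one, D.form_aeval_apply, neg_ne_zero])
  have hw : cycSub a w ≤ f.orthogonal (cycSub a w) := cycSub_le_orthogonal_cycSub ha hww
  have hNw : cycSub a (N w) ≤ f.orthogonal (cycSub a (N w)) :=
    cycSub_le_orthogonal_cycSub ha fun r => by rw [D.form_aeval_apply_apply, hww, neg_zero]
  have hNvNw : cycSub a (N w) ≤ f.orthogonal (cycSub a (N v)) :=
    cycSub_le_orthogonal_cycSub ha fun r => by rw [D.form_aeval_apply_apply, hvw, neg_zero]
  have hswap : IsSwapPair f a N (cycSub a v ⊔ cycSub a (N w)) (cycSub a (N v) ⊔ cycSub a w) :=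
    ((D.isSwapPair_cycSub h2 v).symm hs).sup hs (D.isSwapPair_cycSub h2 w)
      (cycSub_le_orthogonal_cycSub ha hvw) (le_orthogonal_symm hs hNvNw)
  have hP := hpair'.restrict_sup_nondegenerate hs ha hNw
  have htop := hswap.sup_eq_top hs hI hP (hpair.restrict_sup_nondegenerate hs ha hw) <|
    ne_bot_of_le_ne_bot (fun hbot => hv <| hbot.le <| aeval_mem_cycSub a (N v) _)
      (le_sup_left.trans le_sup_right)
  refine .inl ⟨?_, _, _, hswap, htop, hpair.hasLabel_sup hs ha h2 hsq hw⟩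
  rw [← htop, ← finrank_add_finrank_of_le_orthogonal hs hP hswap.le_orthogonal,
    hpair.finrank_sup hs ha hw, hpair'.finrank_sup hs ha hNw]
  omega

end Special

section Trichotomy

variable {f : LinearMap.BilinForm K V} {a N : Module.End K V} [Fintype K] [DecidableEq K]

theorem labelTrichotomy_bot : LabelTrichotomy f a N ⊥ :=
  .inl ⟨by rw [finrank_bot], ⊥, ⊥, isSwapPair_bot, bot_sup_eq _, hasLabel_bot⟩

variable [FiniteDimensional K V]

theorem IsometryParts.labelTrichotomy_top [Nontrivial V] (D : IsometryParts f a N)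
    (hn : f.Nondegenerate) (h2 : (2 : K) ≠ 0) (hsq : IsSquare (-1 : K))
    (hI : IsJointlyIndec f a N) : LabelTrichotomy f a N ⊤ := by
  obtain ⟨π, hm, hπ, n, hzero, hne⟩ := D.exists_primary hn hI
  by_cases hdvd : π ∣ X ^ 2 - C 4
  · obtain ⟨κ, hκ, rfl⟩ := exists_sq_eq_four_of_dvd hπ hm hdvd
    by_cases hN : ∀ x, aeval a ((X - C κ) ^ n) (N x) = 0
    · exact D.labelTrichotomy_top_of_forall_eq_zero hn h2 hsq hI hκ hzero hne hN
    · obtain ⟨v, hv⟩ := not_forall.1 hN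
      exact D.labelTrichotomy_top_of_ne_zero hn h2 hsq hI hκ hzero hv
  · exact D.labelTrichotomy_top_of_not_dvd hn h2 hsq hI hπ hm hdvd hzero hne

theorem LabelTrichotomy.top_of_isCompl (hs : f.IsSymm) {W : Submodule K V}
    (hW : (f.restrict W).Nondegenerate) (h : LabelTrichotomy f a N W)
    (h' : LabelTrichotomy f a N (f.orthogonal W)) : LabelTrichotomy f a N ⊤ := by
  have hcompl := LinearMap.BilinForm.isCompl_orthogonal_of_restrict_nondegenerate hs.isRefl hW
  exact hcompl.sup_eq_top ▸ h.sup hs le_rfl (finrank_add_finrank_of_le_orthogonal hs hW le_rfl) h'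

theorem IsometryParts.labelTrichotomy (D : IsometryParts f a N) (hn : f.Nondegenerate)
    (h2 : (2 : K) ≠ 0) (hsq : IsSquare (-1 : K)) : LabelTrichotomy f a N ⊤ := by
  induction hd : finrank K V using Nat.strong_induction_on generalizing V with
  | _ d ih =>
  subst hd
  rcases subsingleton_or_nontrivial V with hV | hV
  · rw [Subsingleton.elim (⊤ : Submodule K V) ⊥]
    exact labelTrichotomy_bot
  by_cases hI : IsJointlyIndec f a N
  · exact D.labelTrichotomy_top hn h2 hsq hI
  have hproper {W : Submodule K V} (hWa : Invt a W) (hWN : Invt N W)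
      (hW : (f.restrict W).Nondegenerate) (htop : W ≠ ⊤) : LabelTrichotomy f a N W :=
    (ih _ (Submodule.finrank_lt htop) (D.restrict hWa hWN) hW rfl).map_subtype
  obtain ⟨W, hWa, hWN, hW, hbot, htop⟩ : ∃ W : Submodule K V, Invt a W ∧ Invt N W ∧
      (f.restrict W).Nondegenerate ∧ W ≠ ⊥ ∧ W ≠ ⊤ := by
    simpa only [IsJointlyIndec, not_forall, not_or, exists_prop] using hI
  have hcompl := LinearMap.BilinForm.isCompl_orthogonal_of_restrict_nondegenerate
    D.isSymm.isRefl hW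
  exact (hproper hWa hWN hW htop).top_of_isCompl D.isSymm hW <|
    hproper (D.invt_orthogonal hWa hWN).1 (D.invt_orthogonal hWa hWN).2
      (restrict_orthogonal_nondegenerate D.isSymm hn hW) fun h =>
        hbot (by simpa [h] using hcompl.inf_eq_bot)

end Trichotomy

section Determinant

theorem invt_ker_of_commute {S g : Module.End K V} (h : Commute S g) :
    Invt g (LinearMap.ker S) := fun x hx => by
  rw [LinearMap.mem_ker, ← Module.End.mul_apply, h.eq, Module.End.mul_apply,
    LinearMap.mem_ker.1 hx, map_zero]

variable [FiniteDimensional K V]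

theorem det_eq_det_restrict_mul_det_restrict {A B : Submodule K V} (hAB : IsCompl A B)
    {g : Module.End K V} (hA : ∀ x ∈ A, g x ∈ A) (hB : ∀ x ∈ B, g x ∈ B) :
    LinearMap.det g = LinearMap.det (g.restrict hA) * LinearMap.det (g.restrict hB) := by
  rw [← LinearMap.det_prodMap, ← LinearMap.det_conj _ (A.prodEquivOfIsCompl B hAB)]
  congr 1
  ext x
  obtain ⟨y, rfl⟩ := (A.prodEquivOfIsCompl B hAB).surjective x
  simp

theorem det_eq_neg_one_pow_finrank_of_isNilpotent {g : Module.End K V}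
    (hg : IsNilpotent (g + 1)) : LinearMap.det g = (-1) ^ finrank K V := by
  have hdet : (1 : K) = LinearMap.det ((-1 : K) • g) := by
    have h := LinearMap.eval_charpoly (g + 1) (1 : K)
    rw [hg.charpoly_eq_X_pow_finrank, map_one] at h
    simpa using h
  rw [LinearMap.det_smul] at hdet
  calc LinearMap.det g = (-1) ^ finrank K V * ((-1) ^ finrank K V * LinearMap.det g) := by
        rw [← mul_assoc, ← mul_pow]; simp
    _ = (-1) ^ finrank K V := by rw [← hdet, mul_one]

theorem det_restrict_ker_add_one_pow {g : Module.End K V} {k : ℕ}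
    (hg : Invt g (LinearMap.ker ((g + 1) ^ k))) :
    LinearMap.det (g.restrict hg) = (-1) ^ finrank K (LinearMap.ker ((g + 1) ^ k)) := by
  refine det_eq_neg_one_pow_finrank_of_isNilpotent ⟨k, ?_⟩
  have hg' : ∀ x ∈ LinearMap.ker ((g + 1) ^ k), (g + 1) x ∈ LinearMap.ker ((g + 1) ^ k) :=
    invt_ker_of_commute ((Commute.refl (g + 1)).pow_left k)
  have hrestrict : g.restrict hg + 1 = (g + 1).restrict hg' := rfl
  rw [hrestrict, Module.End.pow_restrict]
  exact LinearMap.ext fun x => Subtype.ext x.2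

variable {f : LinearMap.BilinForm K V}

/-- The Cayley identity `f ((1 + g) x) (g y) = f x ((1 + g) y)` compares Gram determinants. -/
theorem det_eq_one_of_det_one_add_ne_zero (hn : f.Nondegenerate) {g : Module.End K V}
    (hg : ∀ x y, f (g x) (g y) = f x y) (hdet : LinearMap.det (1 + g) ≠ 0) :
    LinearMap.det g = 1 := by
  have hcayley : f.comp (1 + g) g = f.comp 1 (1 + g) := by
    ext x y
    simp [hg, add_comm]
  let b := Module.finBasis K V
  have hgram := congrArg (fun B => (LinearMap.BilinForm.toMatrix b B).det) hcayley
  simp only [LinearMap.BilinForm.toMatrix_comp b b, Matrix.det_mul, Matrix.det_transpose,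
    LinearMap.det_toMatrix, map_one, one_mul] at hgram
  have hb := (LinearMap.BilinForm.nondegenerate_iff_det_ne_zero b).1 hn
  refine mul_left_cancel₀ (mul_ne_zero hdet hb) ?_
  linear_combination hgram

end Determinant

section OrthogonalGroup

variable {f : LinearMap.BilinForm K V} {φ g : V ≃ₗ[K] V}

theorem isAdjointPair_symm (hφ : φ ∈ orthGroup f) :
    f.IsAdjointPair f (φ : V →ₗ[K] V) (φ.symm : V →ₗ[K] V) := fun x y => by
  simpa using hφ x (φ.symm y)

theorem isAdjointPair_symm_left (hφ : φ ∈ orthGroup f) :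
    f.IsAdjointPair f (φ.symm : V →ₗ[K] V) (φ : V →ₗ[K] V) :=
  isAdjointPair_symm (φ := φ.symm) ((orthGroup f).inv_mem hφ)

theorem commute_symm (g : V ≃ₗ[K] V) :
    Commute (g.symm : Module.End K V) (g : Module.End K V) :=
  LinearMap.ext fun x => by simp

theorem isAdjointPair_add_one_pow (hg : g ∈ orthGroup f) (k : ℕ) :
    f.IsAdjointPair f (((g.symm : Module.End K V) + 1) ^ k : Module.End K V)
      (((g : Module.End K V) + 1) ^ k : Module.End K V) := by
  have hadj := (isAdjointPair_symm_left hg).add (LinearMap.isAdjointPair_id (B := f))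
  induction k with
  | zero => exact LinearMap.isAdjointPair_id
  | succ k ih =>
    rw [pow_succ ((g.symm : Module.End K V) + 1), pow_succ' ((g : Module.End K V) + 1)]
    exact ih.mul hadj

theorem ker_add_one_pow_le_ker_symm (g : V ≃ₗ[K] V) (k : ℕ) :
    LinearMap.ker (((g : Module.End K V) + 1) ^ k) ≤
      LinearMap.ker (((g.symm : Module.End K V) + 1) ^ k) := by
  have hfactor : (g.symm : Module.End K V) + 1 = g.symm * ((g : Module.End K V) + 1) :=
    LinearMap.ext fun x => by simp [add_comm]
  rw [hfactor, ((commute_symm g).add_right (Commute.one_right _)).mul_pow]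
  exact LinearMap.ker_le_ker_comp _ _

theorem omegaGroup_le_specialOrthGroup (f : LinearMap.BilinForm K V) :
    omegaGroup f ≤ specialOrthGroup f := by
  refine Subgroup.commutator_le.2 fun x hx y hy => ⟨?_, ?_⟩
  · exact Subgroup.commutator_le_self _ (Subgroup.commutator_mem_commutator hx hy)
  · rw [← LinearEquiv.coe_det, map_commutatorElement,
      commutatorElement_eq_one_iff_mul_comm.2 (mul_comm _ _), Units.val_one]

theorem restrict_ker_add_one_pow_nondegenerate (hs : f.IsSymm) (hn : f.Nondegenerate)
    (hg : g ∈ orthGroup f) {k : ℕ} (hk : IsCompl (LinearMap.ker (((g : Module.End K V) + 1) ^ k))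
      (LinearMap.range (((g : Module.End K V) + 1) ^ k))) :
    (f.restrict (LinearMap.ker (((g : Module.End K V) + 1) ^ k))).Nondegenerate :=
  restrict_ker_nondegenerate hs hn (isAdjointPair_add_one_pow hg k)
    (ker_add_one_pow_le_ker_symm g k) hk.sup_eq_top

variable [FiniteDimensional K V]

theorem det_eq_neg_one_pow_finrank_ker (hs : f.IsSymm) (hn : f.Nondegenerate)
    (hg : g ∈ orthGroup f) {k : ℕ} (hk0 : k ≠ 0)
    (hE : (f.restrict (LinearMap.ker (((g : Module.End K V) + 1) ^ k))).Nondegenerate) :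
    LinearMap.det (g : Module.End K V) =
      (-1) ^ finrank K (LinearMap.ker (((g : Module.End K V) + 1) ^ k)) := by
  set G : Module.End K V := (g : V →ₗ[K] V)
  set E := LinearMap.ker ((G + 1) ^ k)
  have hcompl := LinearMap.BilinForm.isCompl_orthogonal_of_restrict_nondegenerate hs.isRefl hE
  have hGE : Invt G E :=
    invt_ker_of_commute (((Commute.refl G).add_left (Commute.one_left G)).pow_left k)
  have hGE' : Invt G (f.orthogonal E) := invt_orthogonal_of_isAdjointPair
    (isAdjointPair_symm_left hg) (invt_ker_of_commute
      (((commute_symm g).symm.add_left (Commute.one_left _)).pow_left k))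
  have hdet : LinearMap.det (1 + G.restrict hGE') ≠ 0 := fun h0 => by
    obtain ⟨x, hx, hx0⟩ :=
      (Submodule.ne_bot_iff _).1 (LinearMap.bot_lt_ker_of_det_eq_zero h0).ne'
    have hx1 : (G + 1) (x : V) = 0 := by
      rw [add_comm]; exact congrArg Subtype.val (LinearMap.mem_ker.1 hx)
    have hxE : (x : V) ∈ E := LinearMap.mem_ker.2 <| by
      rw [← Nat.succ_pred_eq_of_ne_zero hk0, pow_succ, Module.End.mul_apply, hx1, map_zero]
    exact hx0 (Subtype.ext (Submodule.disjoint_def.1 hcompl.disjoint _ hxE x.2))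
  rw [det_eq_det_restrict_mul_det_restrict hcompl hGE hGE', det_restrict_ker_add_one_pow,
    det_eq_one_of_det_one_add_ne_zero (restrict_orthogonal_nondegenerate hs hn hE)
      (fun x y => hg x y) hdet, mul_one]

theorem exists_odd_finrank_of_commute_of_det_eq_neg_one (hs : f.IsSymm) (hn : f.Nondegenerate)
    (h2 : (2 : K) ≠ 0) (hg : g ∈ orthGroup f) (hφ : Commute g φ)
    (hdet : LinearMap.det (g : V →ₗ[K] V) = -1) :
    ∃ U : Submodule K V, Invt (φ : V →ₗ[K] V) U ∧ (f.restrict U).Nondegenerate ∧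
      Odd (finrank K U) := by
  obtain ⟨k, hk, hk0⟩ := ((LinearMap.eventually_isCompl_ker_pow_range_pow
    ((g : Module.End K V) + 1)).and (Filter.eventually_ne_atTop 0)).exists
  have hE := restrict_ker_add_one_pow_nondegenerate hs hn hg hk
  have hφ' : Commute (g : Module.End K V) (φ : Module.End K V) :=
    congrArg LinearEquiv.toLinearMap hφ
  refine ⟨_, invt_ker_of_commute ((hφ'.add_left (Commute.one_left _)).pow_left k), hE, ?_⟩
  by_contra hodd
  rw [det_eq_neg_one_pow_finrank_ker hs hn hg hk0 hE, (Nat.not_odd_iff_even.1 hodd).neg_one_pow]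
    at hdet
  exact h2 (by linear_combination hdet)

end OrthogonalGroup

section Reversal

/-- The self-adjoint part `φ + φ⁻¹` of an isometry `φ`, up to the factor `2`. -/
def selfAdjointPart (φ : V ≃ₗ[K] V) : Module.End K V := φ.toLinearMap + φ.symm.toLinearMap

/-- The skew-adjoint part `φ - φ⁻¹` of an isometry `φ`, up to the factor `2`. -/
def skewAdjointPart (φ : V ≃ₗ[K] V) : Module.End K V := φ.toLinearMap - φ.symm.toLinearMap

theorem two_smul_apply (φ : V ≃ₗ[K] V) (x : V) :
    (2 : K) • φ x = selfAdjointPart φ x + skewAdjointPart φ x := by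
  change _ = φ x + φ.symm x + (φ x - φ.symm x)
  module

theorem two_smul_symm_apply (φ : V ≃ₗ[K] V) (x : V) :
    (2 : K) • φ.symm x = selfAdjointPart φ x - skewAdjointPart φ x := by
  change _ = φ x + φ.symm x - (φ x - φ.symm x)
  module

theorem invt_symm [FiniteDimensional K V] {φ : V ≃ₗ[K] V} {U : Submodule K V}
    (hU : Invt (φ : V →ₗ[K] V) U) : Invt (φ.symm : V →ₗ[K] V) U := by
  have hmap : U.map (φ : V →ₗ[K] V) = U :=
    Submodule.eq_of_le_of_finrank_eq (Submodule.map_le_iff_le_comap.2 hU)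
      (LinearEquiv.finrank_map_eq φ U)
  intro x hx
  obtain ⟨y, hy, rfl⟩ := hmap.ge hx
  simpa using hy

theorem invt_selfAdjointPart [FiniteDimensional K V] {φ : V ≃ₗ[K] V} {U : Submodule K V}
    (hU : Invt (φ : V →ₗ[K] V) U) : Invt (selfAdjointPart φ) U :=
  fun x hx => U.add_mem (hU x hx) (invt_symm hU x hx)

theorem invt_skewAdjointPart [FiniteDimensional K V] {φ : V ≃ₗ[K] V} {U : Submodule K V}
    (hU : Invt (φ : V →ₗ[K] V) U) : Invt (skewAdjointPart φ) U :=
  fun x hx => U.sub_mem (hU x hx) (invt_symm hU x hx)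

variable {f : LinearMap.BilinForm K V} {φ : V ≃ₗ[K] V}

theorem isometryParts (hs : f.IsSymm) (hφ : φ ∈ orthGroup f) :
    IsometryParts f (selfAdjointPart φ) (skewAdjointPart φ) where
  isSymm := hs
  isSelfAdjoint := by
    have h := (isAdjointPair_symm hφ).add (isAdjointPair_symm_left hφ)
    rwa [add_comm (φ.symm.toLinearMap : V → V)] at h
  isSkewAdjoint := by
    have h := (isAdjointPair_symm hφ).sub (isAdjointPair_symm_left hφ)
    rwa [← neg_sub (φ.toLinearMap : V → V)] at h
  commute := ((Commute.refl _).add_right (commute_symm φ).symm).sub_left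
    ((commute_symm φ).add_right (Commute.refl _))
  sq := LinearMap.ext fun x => by
    simp only [selfAdjointPart, skewAdjointPart, pow_two, Module.End.mul_apply,
      LinearMap.add_apply, LinearMap.sub_apply, map_add, map_sub, LinearEquiv.coe_coe,
      LinearEquiv.apply_symm_apply, LinearEquiv.symm_apply_apply, Module.End.ofNat_apply]
    module

theorem mul_mul_inv_eq_inv_of_isSwapPair (h2 : (2 : K) ≠ 0) {P M : Submodule K V}
    (h : IsSwapPair f (selfAdjointPart φ) (skewAdjointPart φ) P M) (hPM : P ⊔ M = ⊤)
    {σ : V ≃ₗ[K] V} (hP : ∀ x ∈ P, σ x = x) (hM : ∀ x ∈ M, σ x = -x) :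
    σ * φ * σ⁻¹ = φ⁻¹ := by
  refine mul_inv_eq_iff_eq_mul.2 (LinearEquiv.ext fun x => smul_right_injective V h2 ?_)
  change (2 : K) • σ (φ x) = (2 : K) • φ.symm (σ x)
  obtain ⟨p, hp, m, hm, rfl⟩ := Submodule.mem_sup.1 (hPM.ge (Submodule.mem_top (x := x)))
  rw [← map_smul, two_smul_apply, two_smul_symm_apply]
  simp only [map_add, hP p hp, hM m hm, map_neg]
  rw [hP _ (h.invt_left p hp), hM _ (h.invt_right m hm), hM _ (h.le_comap_left hp),
    hP _ (h.le_comap_right hm)]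
  abel

theorem pow_two_eq_one_of_sup_eq_top {P M : Submodule K V} (hPM : P ⊔ M = ⊤) {σ : V ≃ₗ[K] V}
    (hP : ∀ x ∈ P, σ x = x) (hM : ∀ x ∈ M, σ x = -x) : σ ^ 2 = 1 := by
  refine LinearEquiv.ext fun x => ?_
  obtain ⟨p, hp, m, hm, rfl⟩ := Submodule.mem_sup.1 (hPM.ge (Submodule.mem_top (x := x)))
  simp [pow_two, hP p hp, hM m hm]

variable [Fintype K] [DecidableEq K] {e : ZMod 2} {δ : ℤ}

theorem ReversalLabel.exists_prod_orthReflection (hs : f.IsSymm) (h2 : (2 : K) ≠ 0)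
    (h : ReversalLabel f (selfAdjointPart φ) (skewAdjointPart φ) ⊤ e δ) :
    ∃ l : List V, (l.Pairwise fun x y => f x y = 0) ∧ (∀ x ∈ l, f x x ≠ 0) ∧
      (l.length : ZMod 2) = e ∧ quadraticChar K (l.map fun x => f x x).prod = δ ∧
      (l.map (orthReflection f)).prod ^ 2 = 1 ∧
      (l.map (orthReflection f)).prod * φ * (l.map (orthReflection f)).prod⁻¹ = φ⁻¹ := by
  obtain ⟨P, M, hswap, hPM, l, hp, hne, rfl, he, hδ⟩ := h
  have hM : ∀ x ∈ Submodule.span K {y | y ∈ l}, (l.map (orthReflection f)).prod x = -x :=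
    fun x hx => prod_orthReflection_apply_of_mem_span hs hp hne hx
  have hP : ∀ x ∈ P, (l.map (orthReflection f)).prod x = x := fun x hx =>
    prod_orthReflection_apply_of_forall_eq_zero fun y hy =>
      le_orthogonal_symm hs hswap.le_orthogonal hx y (Submodule.subset_span hy)
  exact ⟨l, hp, hne, he, hδ, pow_two_eq_one_of_sup_eq_top hPM hP hM,
    mul_mul_inv_eq_inv_of_isSwapPair h2 hswap hPM hP hM⟩

theorem ReversalLabel.exists_mem_omegaGroup (hs : f.IsSymm) (h2 : (2 : K) ≠ 0)
    (h : ReversalLabel f (selfAdjointPart φ) (skewAdjointPart φ) ⊤ 0 1) :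
    ∃ σ ∈ omegaGroup f, σ ^ 2 = 1 ∧ σ * φ * σ⁻¹ = φ⁻¹ := by
  obtain ⟨l, hp, hne, he, hδ, hσ⟩ := h.exists_prod_orthReflection hs h2
  exact ⟨_, prod_orthReflection_mem_omegaGroup hs h2
    (ZMod.natCast_eq_zero_iff_even.1 he) hp hne hδ, hσ⟩

theorem ReversalLabel.exists_det_eq_neg_one [FiniteDimensional K V] (hs : f.IsSymm)
    (h2 : (2 : K) ≠ 0)
    (h : ReversalLabel f (selfAdjointPart φ) (skewAdjointPart φ) ⊤ 1 δ) :
    ∃ σ ∈ orthGroup f, LinearMap.det (σ : V →ₗ[K] V) = -1 ∧ σ * φ * σ⁻¹ = φ⁻¹ := by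
  obtain ⟨l, -, hne, he, -, -, hσ⟩ := h.exists_prod_orthReflection hs h2
  exact ⟨_, prod_orthReflection_mem_orthGroup hs l, (det_prod_orthReflection hne).trans
    (ZMod.natCast_eq_one_iff_odd.1 he).neg_one_pow, hσ⟩

end Reversal

section OddSummand

theorem invt_map_subtype_iff {g : Module.End K V} {U : Submodule K V} {hU : Invt g U}
    {W : Submodule K U} : Invt g (W.map U.subtype) ↔ Invt (g.restrict hU) W := by
  constructor
  · intro h x hx
    obtain ⟨y, hy, hyx⟩ := h x ⟨x, hx, rfl⟩
    have hyx' : y = g.restrict hU x := Subtype.ext hyx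
    exact hyx' ▸ hy
  · rintro h _ ⟨x, hx, rfl⟩
    exact ⟨_, h x hx, rfl⟩

variable [FiniteDimensional K V] {f : LinearMap.BilinForm K V} {φ : V ≃ₗ[K] V}

theorem invt_restrict_orthogonal (hφ : φ ∈ orthGroup f) {U : Submodule K V}
    {hU : Invt (φ : V →ₗ[K] V) U} {W : Submodule K U}
    (hW : Invt ((φ : V →ₗ[K] V).restrict hU) W) :
    Invt ((φ : V →ₗ[K] V).restrict hU) ((f.restrict U).orthogonal W) := by
  have hW' : Invt ((φ.symm : V →ₗ[K] V).restrict (invt_symm hU)) W :=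
    invt_map_subtype_iff.1 (invt_symm (invt_map_subtype_iff.2 hW))
  have hadj : (f.restrict U).IsAdjointPair (f.restrict U)
      ((φ.symm : V →ₗ[K] V).restrict (invt_symm hU)) ((φ : V →ₗ[K] V).restrict hU) :=
    fun x y => isAdjointPair_symm_left hφ x y
  exact invt_orthogonal_of_isAdjointPair hadj hW'

theorem exists_orthIndec_of_odd_finrank (hs : f.IsSymm) (hφ : φ ∈ orthGroup f)
    (h : ∃ U : Submodule K V, Invt (φ : V →ₗ[K] V) U ∧ (f.restrict U).Nondegenerate ∧
      Odd (finrank K U)) :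
    ∃ (U : Submodule K V) (hU : Invt (φ : V →ₗ[K] V) U), (f.restrict U).Nondegenerate ∧
      Odd (finrank K U) ∧ OrthIndec (f.restrict U) ((φ : V →ₗ[K] V).restrict hU) := by
  obtain ⟨U, ⟨hU, hUn, hodd⟩, hmin⟩ :=
    exists_minimalFor_of_wellFoundedLT _ (fun U : Submodule K V => finrank K U) h
  have hdescend {W : Submodule K U} (hW : Invt ((φ : V →ₗ[K] V).restrict hU) W)
      (hWn : ((f.restrict U).restrict W).Nondegenerate) (hWodd : Odd (finrank K W)) :
      W = ⊤ := by
    have hdim := Submodule.finrank_map_subtype_eq U W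
    have hle := Submodule.finrank_le W
    refine Submodule.eq_top_of_finrank_eq (le_antisymm hle (hdim ▸ hmin ?_ (hdim.trans_le hle)))
    exact ⟨invt_map_subtype_iff.2 hW, (restrict_map_subtype_nondegenerate_iff hs).2 hWn,
      hdim.symm ▸ hWodd⟩
  refine ⟨U, hU, hUn, hodd, fun hbot => ?_, fun W hW hWn => ?_⟩
  · have hrank := congrArg (fun W : Submodule K U => finrank K W) hbot
    simp only [finrank_bot, finrank_top] at hrank
    exact hodd.pos.ne hrank
  have hsU := hs.restrict U
  have hcompl := LinearMap.BilinForm.isCompl_orthogonal_of_restrict_nondegenerate hsU.isRefl hWn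
  rcases Nat.even_or_odd (finrank K W) with heven | hWodd
  · rw [← Submodule.finrank_add_eq_of_isCompl hcompl, Nat.odd_add'] at hodd
    have htop := hdescend (invt_restrict_orthogonal hφ hW)
      (restrict_orthogonal_nondegenerate hsU hUn hWn) (hodd.2 heven)
    exact .inl (by simpa [htop] using hcompl.inf_eq_bot)
  · exact .inr (hdescend hW hWn hWodd)

end OddSummand

section Criterion

variable [FiniteDimensional K V] {f : LinearMap.BilinForm K V} {φ : V ≃ₗ[K] V}

theorem reversalLabel_of_odd_finrank [Fintype K] [DecidableEq K] (hs : f.IsSymm)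
    (hn : f.Nondegenerate) (h2 : (2 : K) ≠ 0) (hsq : IsSquare (-1 : K)) (hφ : φ ∈ orthGroup f)
    (heven : Even (finrank K V)) {U : Submodule K V} (hU : Invt (φ : V →ₗ[K] V) U)
    (hUn : (f.restrict U).Nondegenerate) (hodd : Odd (finrank K U)) :
    ReversalLabel f (selfAdjointPart φ) (skewAdjointPart φ) ⊤ 0 1 := by
  have D := isometryParts hs hφ
  have hlabel {W : Submodule K V} (ha : Invt (selfAdjointPart φ) W)
      (hN : Invt (skewAdjointPart φ) W) (hW : (f.restrict W).Nondegenerate)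
      (hWodd : Odd (finrank K W)) :
      ReversalLabel f (selfAdjointPart φ) (skewAdjointPart φ) W 0 1 :=
    (((D.restrict ha hN).labelTrichotomy hW h2 hsq).map_subtype.of_finrank_odd hWodd).1
  have ha := invt_selfAdjointPart hU
  have hN := invt_skewAdjointPart hU
  have hcompl := LinearMap.BilinForm.isCompl_orthogonal_of_restrict_nondegenerate hs.isRefl hUn
  rw [← Submodule.finrank_add_eq_of_isCompl hcompl, Nat.even_add'] at heven
  have hsup := (hlabel ha hN hUn hodd).sup hs le_rfl
    (hlabel (D.invt_orthogonal ha hN).1 (D.invt_orthogonal ha hN).2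
      (restrict_orthogonal_nondegenerate hs hn hUn) (heven.1 hodd))
  rwa [hcompl.sup_eq_top, add_zero, mul_one] at hsup

variable [Finite K]

theorem exists_mem_omegaGroup_of_exists_odd_finrank (hs : f.IsSymm) (hn : f.Nondegenerate)
    (h2 : (2 : K) ≠ 0) (hsq : IsSquare (-1 : K)) (hφ : φ ∈ orthGroup f)
    (h : finrank K V % 4 = 2 → ∃ U : Submodule K V, Invt (φ : V →ₗ[K] V) U ∧
      (f.restrict U).Nondegenerate ∧ Odd (finrank K U)) :
    ∃ σ ∈ omegaGroup f, σ ^ 2 = 1 ∧ σ * φ * σ⁻¹ = φ⁻¹ := by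
  classical
  have := Fintype.ofFinite K
  refine ReversalLabel.exists_mem_omegaGroup hs h2 ?_
  rcases (isometryParts hs hφ).labelTrichotomy hn h2 hsq with ⟨-, h0⟩ | ⟨hd, -⟩ | ⟨h0, -⟩
  · exact h0
  · rw [finrank_top] at hd
    obtain ⟨U, hU, hUn, hodd⟩ := h hd
    exact reversalLabel_of_odd_finrank hs hn h2 hsq hφ (Nat.even_iff.2 (by omega)) hU hUn hodd
  · exact h0

theorem exists_odd_finrank_of_mem_specialOrthGroup (hs : f.IsSymm) (hn : f.Nondegenerate)
    (h2 : (2 : K) ≠ 0) (hsq : IsSquare (-1 : K)) (hφ : φ ∈ orthGroup f) {α : V ≃ₗ[K] V}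
    (hα : α ∈ specialOrthGroup f) (hrev : α * φ * α⁻¹ = φ⁻¹) (hd : finrank K V % 4 = 2) :
    ∃ U : Submodule K V, Invt (φ : V →ₗ[K] V) U ∧ (f.restrict U).Nondegenerate ∧
      Odd (finrank K U) := by
  classical
  have := Fintype.ofFinite K
  obtain ⟨δ, hlabel⟩ : ∃ δ, ReversalLabel f (selfAdjointPart φ) (skewAdjointPart φ) ⊤ 1 δ := by
    rcases (isometryParts hs hφ).labelTrichotomy hn h2 hsq with ⟨hd', -⟩ | ⟨-, h1⟩ | ⟨-, h1⟩
    · rw [finrank_top] at hd'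
      omega
    · exact ⟨1, h1 1 (.inl rfl)⟩
    · exact h1
  obtain ⟨σ, hσ, hdet, hσrev⟩ := hlabel.exists_det_eq_neg_one hs h2
  have hcomm : Commute (σ * α) φ := by
    rw [commute_iff_eq, ← mul_inv_eq_iff_eq_mul]
    calc σ * α * φ * (σ * α)⁻¹ = σ * (α * φ * α⁻¹) * σ⁻¹ := by group
      _ = (σ * φ * σ⁻¹)⁻¹ := by rw [hrev]; group
      _ = φ := by rw [hσrev, inv_inv]
  refine exists_odd_finrank_of_commute_of_det_eq_neg_one hs hn h2
    ((orthGroup f).mul_mem hσ hα.1) hcomm ?_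
  rw [LinearEquiv.coe_toLinearMap_mul, map_mul, hdet, hα.2, mul_one]

end Criterion

/-- For `K = GF(q)`, `q ≡ 1 (mod 4)`, and `φ ∈ O(V)`, the following are
equivalent: (1) `φ` is reversed by an involution of `Ω(V)`; (2) `φ` is reversed by an element
of `SO(V)`; (3) if `dim V ≡ 2 (mod 4)` then `φ` has an orthogonally indecomposable orthogonal
summand of odd dimension. -/
theorem stmt3 [Fintype K] {q : ℕ} (hq : Fintype.card K = q) (h1 : q % 4 = 1)
    [FiniteDimensional K V]
    (f : LinearMap.BilinForm K V) (hsymm : f.IsSymm) (hnd : f.Nondegenerate)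
    (φ : V ≃ₗ[K] V) (hφ : φ ∈ orthGroup f) :
    ((∃ σ : V ≃ₗ[K] V, σ ∈ omegaGroup f ∧ σ ^ 2 = 1 ∧ σ * φ * σ⁻¹ = φ⁻¹) ↔
        (∃ α : V ≃ₗ[K] V, α ∈ specialOrthGroup f ∧ α * φ * α⁻¹ = φ⁻¹)) ∧
      ((∃ α : V ≃ₗ[K] V, α ∈ specialOrthGroup f ∧ α * φ * α⁻¹ = φ⁻¹) ↔
        (Module.finrank K V % 4 = 2 →
          ∃ (U : Submodule K V) (hU : Invt (φ : V →ₗ[K] V) U),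
            (f.restrict U).Nondegenerate ∧ Odd (Module.finrank K U) ∧
            OrthIndec (f.restrict U) ((φ : V →ₗ[K] V).restrict hU))) := by
  have h2 : (2 : K) ≠ 0 := Ring.two_ne_zero fun hchar => by
    have := FiniteField.even_card_iff_char_two.1 hchar
    omega
  have hsq : IsSquare (-1 : K) := FiniteField.isSquare_neg_one_iff.2 (by omega)
  have h12 : (∃ σ ∈ omegaGroup f, σ ^ 2 = 1 ∧ σ * φ * σ⁻¹ = φ⁻¹) →
      ∃ α ∈ specialOrthGroup f, α * φ * α⁻¹ = φ⁻¹ := fun ⟨σ, hσ, _, hrev⟩ =>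
    ⟨σ, omegaGroup_le_specialOrthGroup f hσ, hrev⟩
  have h23 := fun (⟨α, hα, hrev⟩ : ∃ α ∈ specialOrthGroup f, α * φ * α⁻¹ = φ⁻¹)
      (hd : finrank K V % 4 = 2) => exists_orthIndec_of_odd_finrank hsymm hφ <|
    exists_odd_finrank_of_mem_specialOrthGroup hsymm hnd h2 hsq hφ hα hrev hd
  have h31 := exists_mem_omegaGroup_of_exists_odd_finrank hsymm hnd h2 hsq hφ
  refine ⟨⟨h12, fun h => h31 fun hd => ?_⟩, h23, fun h => h12 (h31 fun hd => ?_)⟩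
  · obtain ⟨U, hU, hUn, hodd, -⟩ := h23 h hd
    exact ⟨U, hU, hUn, hodd⟩
  · obtain ⟨U, hU, hUn, hodd, -⟩ := h hd
    exact ⟨U, hU, hUn, hodd⟩

end Biref
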